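/- arXiv:0811.0044 — 14 statements merged into one kernel-verified Lean document; each statement's English description precedes it below -/
import Mathlib

section
/- For every integer m ≥ 3, the inequality 2·S(m−2) < P(m) − 2 holds; that is, the largest color S(m−2) appearing in the canonical coloring satisfies S(m−2) < P(m)/2 − 1. -/
/-- The Pell numbers: P 1 = 1, P 2 = 2, P (m+2) = 2 * P (m+1) + P m. -/
def pell : ℕ → ℕ
  | 0 => 0
  | 1 => 1
  | n + 2 => 2 * pell (n + 1) + pell n

/-- The sequence S: S 1 = 1, S 2 = 3, S (n+2) = 2 * S (n+1) + S n + 1. -/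
def S : ℕ → ℕ
  | 0 => 0
  | 1 => 1
  | n + 2 => 2 * S (n + 1) + S n + 1

theorem S_aux (n : ℕ) : 2 * S (n + 1) + 3 ≤ pell (n + 3) ∧ 2 * S (n + 2) + 3 ≤ pell (n + 4) := by
  induction n with
  | zero => decide
  | succ k ih =>
    obtain ⟨h1, h2⟩ := ih
    refine ⟨h2, ?_⟩
    have e1 : S (k + 1 + 2) = 2 * S (k + 2) + S (k + 1) + 1 := rfl
    have e2 : pell (k + 1 + 4) = 2 * pell (k + 4) + pell (k + 3) := rfl
    omega

/-- For every m ≥ 3, 2·S(m−2) < P(m) − 2, i.e. S(m−2) < P(m)/2 − 1. -/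
theorem stmt_0 (m : ℕ) (hm : 3 ≤ m) : 2 * S (m - 2) < pell m - 2 := by
  obtain ⟨n, rfl⟩ := Nat.exists_eq_add_of_le' hm
  have h := (S_aux n).1
  have e : n + 3 - 2 = n + 1 := rfl
  rw [e]
  omega
end

section
/- For every integer n ≥ 3, the number L(2n) − 2 is not prime. (This is the determinant of the Turk's Head Knot THK(3,n), so THK(3,n) has composite determinant.) -/
/-- The Lucas numbers: L 0 = 2, L 1 = 1, L (n+2) = L (n+1) + L n. -/
def lucas : ℕ → ℕ
  | 0 => 2
  | 1 => 1
  | n + 2 => lucas (n + 1) + lucas n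

theorem lucas_aux (n : ℕ) :
    ((lucas (2 * n) : ℤ) = (lucas n : ℤ) ^ 2 - 2 * (-1) ^ n) ∧
    ((lucas (2 * n + 1) : ℤ) = (lucas n : ℤ) * lucas (n + 1) - (-1) ^ n) ∧
    ((lucas (n + 1) : ℤ) ^ 2 - lucas n * lucas (n + 1) - (lucas n : ℤ) ^ 2 = -5 * (-1) ^ n) := by
  induction n with
  | zero => simp [lucas]
  | succ k ih =>
    obtain ⟨h1, h2, h3⟩ := ih
    have e1 : lucas (2 * (k + 1)) = lucas (2 * k + 1) + lucas (2 * k) := by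
      rw [show 2 * (k + 1) = 2 * k + 2 by ring, lucas]
    have e2 : lucas (2 * (k + 1) + 1) = lucas (2 * (k + 1)) + lucas (2 * k + 1) := by
      rw [show 2 * (k + 1) + 1 = 2 * k + 1 + 2 by ring, lucas]
      rfl
    have e3 : lucas (k + 1 + 1) = lucas (k + 1) + lucas k := by
      rw [lucas]
    rw [e2, e1, e3]
    push_cast
    rw [h1, h2, pow_succ]
    refine ⟨?_, ?_, ?_⟩ <;> linear_combination (exp := 1) (-1 : ℤ) * h3

theorem lucas_lb (n : ℕ) : 4 ≤ lucas (n + 3) ∧ 7 ≤ lucas (n + 4) := by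
  induction n with
  | zero => simp [lucas]
  | succ k ih =>
    refine ⟨by have := ih.2; rw [show k + 1 + 3 = k + 4 by ring]; omega, ?_⟩
    rw [show k + 1 + 4 = k + 3 + 2 by ring, lucas]
    have := ih.2
    rw [show k + 3 + 1 = k + 4 by ring]
    omega

/-- For every n ≥ 3, the determinant L(2n) − 2 of THK(3,n) is not prime. -/
theorem stmt_3 (n : ℕ) (hn : 3 ≤ n) : ¬ Nat.Prime (lucas (2 * n) - 2) := by
  obtain ⟨h1, -, -⟩ := lucas_aux n
  have h4 : 4 ≤ lucas n := by
    obtain ⟨k, rfl⟩ := Nat.exists_eq_add_of_le' hn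
    exact (lucas_lb k).1
  rcases Nat.even_or_odd n with he | ho
  · rw [he.neg_one_pow] at h1
    obtain ⟨m, hm⟩ := Nat.exists_eq_add_of_le' h4
    rw [hm] at h1
    have : lucas (2 * n) - 2 = (m + 2) * (m + 6) := by
      have h : lucas (2 * n) = (m + 2) * (m + 6) + 2 := by
        zify
        rw [h1]
        push_cast
        ring
      omega
    rw [this]
    exact Nat.not_prime_mul (by omega) (by omega)
  · rw [ho.neg_one_pow] at h1
    have : lucas (2 * n) - 2 = lucas n * lucas n := by
      have h : lucas (2 * n) = lucas n * lucas n + 2 := by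
        zify
        rw [h1]
        ring
      omega
    rw [this]
    exact Nat.not_prime_mul (by omega) (by omega)
end

section
/- Let W_n be the wheel graph on n+1 vertices: the simple graph on Fin (n+1) in which vertex 0 (the hub) is adjacent to every vertex i with 1 ≤ i ≤ n, and the rim vertices 1, 2, …, n form a cycle (i adjacent to i+1 for 1 ≤ i ≤ n−1, and n adjacent to 1). For every n ≥ 3, the number of spanning trees of W_n (the number of spanning subgraphs H of W_n such that the graph underlying H is a tree) equals L(2n) − 2. -/
/-- The wheel graph on `n+1` vertices: vertex `0` is the hub, adjacent to every
vertex `i` with `1 ≤ i ≤ n`, and the rim vertices `1, …, n` form a cycle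
(`i` adjacent to `i+1` for `1 ≤ i ≤ n−1`, and `n` adjacent to `1`). -/
def wheel (n : ℕ) : SimpleGraph (Fin (n + 1)) :=
  SimpleGraph.fromRel (fun a b =>
    a = 0 ∨ (1 ≤ a.val ∧ a.val + 1 = b.val) ∨ (a.val = n ∧ b.val = 1))

open Matrix in
theorem wl_sum {α : Type*} [Fintype α] [DecidableEq α] (M : Matrix α α ℕ) (m : ℕ) : ∀ u : Matrix α α ℕ,
    ∑ f : Fin (m+1) → α, (∏ i : Fin m, M (f i.castSucc) (f i.succ)) * u (f (Fin.last m)) (f 0)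
      = trace (u * M ^ m) := by
  induction m with
  | zero =>
    intro u
    simp only [Finset.univ_eq_empty, Finset.prod_empty, one_mul, pow_zero, mul_one, Matrix.trace, Matrix.diag]
    refine Fintype.sum_equiv (Equiv.funUnique (Fin 1) α) _ _ ?_
    intro f; rfl
  | succ m ih =>
    intro u
    rw [pow_succ', ← mul_assoc, ← ih (u * M)]
    rw [← (Fin.consEquiv (fun _ : Fin (m+2) => α)).sum_comp, Fintype.sum_prod_type, Finset.sum_comm]
    refine Finset.sum_congr rfl fun g _ => ?_
    rw [Matrix.mul_apply, Finset.mul_sum]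
    refine Finset.sum_congr rfl fun x _ => ?_
    have : Fin.last (m+1) = (Fin.last m).succ := rfl
    simp only [Fin.consEquiv_apply, Fin.prod_univ_succ, this, Fin.cons_succ, Fin.cons_zero, Fin.castSucc_zero, ← Fin.succ_castSucc]
    ring

def wM : Matrix (Fin 3) (Fin 3) ℕ := !![1,1,1;1,1,0;1,1,1]

theorem wM_trace (n : ℕ) : (wM ^ (n+1)).trace = lucas (2 * (n+1)) ∧ (wM ^ (n+2)).trace = lucas (2 * (n+2)) := by
  induction n with
  | zero => constructor <;> decide
  | succ n ih =>
    refine ⟨ih.2, ?_⟩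
    have h : wM ^ 3 + wM = 3 • wM ^ 2 := by decide
    have h2 := congrArg (fun A => (wM ^ n * A).trace) h
    simp only [mul_add, Matrix.trace_add, mul_smul_comm, Matrix.trace_smul, ← pow_add, ← pow_succ] at h2
    rw [ih.1, ih.2] at h2
    have e1 : lucas (2*(n+1+2)) = lucas (2*n+5) + lucas (2*n+4) := by
      rw [show 2*(n+1+2) = (2*n+4)+2 by ring]; rfl
    have e2 : lucas (2*n+5) = lucas (2*n+4) + lucas (2*n+3) := rfl
    have e3 : lucas (2*n+4) = lucas (2*n+3) + lucas (2*n+2) := rfl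
    have e4 : 2*(n+2) = 2*n+4 := by ring
    have e5 : 2*(n+1) = 2*n+2 := by ring
    rw [e4, e5] at h2
    rw [show n+1+2 = n+3 by ring] at *
    simp at h2
    omega

theorem wcount (m : ℕ) : Fintype.card {f : Fin (m+1) → Fin 3 // ∀ i, ¬ (f i = 1 ∧ f (i+1) = 2)} = lucas (2 * (m+1)) := by
  have h := wl_sum wM m wM
  rw [← pow_succ', (wM_trace m).1] at h
  rw [← h, Fintype.card_subtype, Finset.card_filter]
  refine Finset.sum_congr rfl fun f _ => ?_
  have hM : ∀ a b, wM a b = if ¬ (a = 1 ∧ b = 2) then 1 else 0 := by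
    intro a b; fin_cases a <;> fin_cases b <;> rfl
  simp only [hM]
  have := Fin.prod_univ_castSucc (fun i : Fin (m+1) => if ¬ (f i = 1 ∧ f (i+1) = 2) then 1 else 0)
  simp only [Fin.coeSucc_eq_succ, Fin.last_add_one] at this
  rw [← this, Finset.prod_boole]
  simp

theorem wcount2 (m : ℕ) : Nat.card {f : Fin (m+1) → Fin 3 // (∀ i, ¬ (f i = 1 ∧ f (i+1) = 2)) ∧ (∃ i, f i ≠ 1) ∧ (∃ i, f i ≠ 2)} = lucas (2 * (m+1)) - 2 := by
  classical
  rw [← wcount, Nat.card_eq_fintype_card, Fintype.card_subtype, Fintype.card_subtype]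
  have h2 : ({fun _ => 1, fun _ => 2} : Finset (Fin (m+1) → Fin 3)).card = 2 := by
    rw [Finset.card_pair]
    intro h; have := congrFun h 0; revert this; simp
  refine Eq.trans ?_ (congrArg (fun t => _ - t) h2)
  rw [← Finset.card_sdiff_of_subset]
  · congr 1
    ext f
    simp [funext_iff]
  · intro f hf
    simp at hf
    rcases hf with rfl | rfl <;> simp

/-- The graph whose edges join each vertex to its parent. -/
def parG {V : Type*} (p : V → V) : SimpleGraph V := SimpleGraph.fromRel (fun a b => p a = b)

theorem parG_adj {V : Type*} (p : V → V) (a b : V) :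
    (parG p).Adj a b ↔ a ≠ b ∧ (p a = b ∨ p b = a) := by
  simp [parG]

theorem parG_conn {V : Type*} (p : V → V) (r : V) (h : ∀ v, ∃ k, p^[k] v = r) :
    (parG p).Connected := by
  have key : ∀ k v, (parG p).Reachable v (p^[k] v) := by
    intro k
    induction k with
    | zero => intro v; exact SimpleGraph.Reachable.refl v
    | succ k ih =>
      intro v
      rw [Function.iterate_succ_apply]
      refine SimpleGraph.Reachable.trans ?_ (ih (p v))
      by_cases hv : v = p v
      · rw [← hv]
      · exact SimpleGraph.Adj.reachable ((parG_adj _ _ _).2 ⟨hv, Or.inl rfl⟩)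
  have k2 : ∀ v, (parG p).Reachable v r := by
    intro v
    obtain ⟨k, hk⟩ := h v
    have := key k v
    rwa [hk] at this
  have : Nonempty V := ⟨r⟩
  exact ⟨fun a b => (k2 a).trans (k2 b).symm⟩

theorem parG_tree {V : Type*} [Finite V] (p : V → V) (r : V) (hr : p r = r)
    (h : ∀ v, ∃ k, p^[k] v = r) : (parG p).IsTree := by
  classical
  have hc := parG_conn p r h
  rw [SimpleGraph.isTree_iff_connected_and_card]
  refine ⟨hc, le_antisymm ?_ hc.card_vert_le_card_edgeSet_add_one⟩
  have := Fintype.ofFinite V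
  have hsub : (parG p).edgeSet ⊆ (fun v => s(v, p v)) '' {v | v ≠ r} := by
    intro e
    induction e with
    | _ a b =>
      rw [SimpleGraph.mem_edgeSet, parG_adj]
      rintro ⟨hab, h1 | h1⟩
      · refine ⟨a, ?_, ?_⟩
        · rintro rfl; exact hab (hr.symm.trans h1)
        · simp [h1]
      · refine ⟨b, ?_, ?_⟩
        · rintro rfl; exact hab (h1.symm.trans hr)
        · simp [h1, Sym2.eq_swap]
  have h1 := Set.ncard_le_ncard hsub (Set.toFinite _)
  have h2 := Set.ncard_image_le (f := fun v => s(v, p v)) (Set.toFinite {v | v ≠ r})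
  have h3 : ({v | v ≠ r} : Set V).ncard + 1 = Nat.card V := by
    have := Set.ncard_add_ncard_compl ({r} : Set V)
    rw [Set.ncard_singleton] at this
    have e : ({r} : Set V)ᶜ = {v | v ≠ r} := by ext; simp
    rw [e] at this
    omega
  rw [Nat.card_coe_set_eq]
  omega

theorem no_two_cycle {V : Type*} (p : V → V) (r : V) (hr : p r = r)
    (h : ∀ v, ∃ k, p^[k] v = r) (v : V) (hv : p (p v) = v) : v = r := by
  obtain ⟨k, hk⟩ := h v
  have : ∀ k, p^[k] v = v ∨ p^[k] v = p v := by
    intro k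
    induction k with
    | zero => left; rfl
    | succ k ih =>
      rw [Function.iterate_succ_apply']
      rcases ih with h | h <;> rw [h]
      · right; rfl
      · left; exact hv
  rcases this k with h1 | h1
  · exact h1.symm.trans hk
  · rw [hk] at h1
    rw [← hv, ← h1, hr]

theorem parG_inj {V : Type*} (p q : V → V) (r : V) (hp : p r = r) (hq : q r = r)
    (h : ∀ v, ∃ k, q^[k] v = r) (e : parG p = parG q) : p = q := by
  funext v
  by_contra hne
  have step : ∀ v, p v ≠ q v → p (q v) ≠ q (q v) := by
    intro v hv
    have hvr : v ≠ r := by rintro rfl; exact hv (hp.trans hq.symm)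
    have hqv : v ≠ q v := by
      intro h'
      exact hvr (no_two_cycle q r hq h v (by rw [← h', ← h']))
    have h1 : (parG p).Adj v (q v) := by rw [e, parG_adj]; exact ⟨hqv, Or.inl rfl⟩
    rw [parG_adj] at h1
    rcases h1.2 with h2 | h2
    · exact absurd h2 hv
    · rw [h2]
      intro h3
      exact hvr (no_two_cycle q r hq h v h3.symm)
  have all : ∀ k, p (q^[k] v) ≠ q (q^[k] v) := by
    intro k
    induction k with
    | zero => exact hne
    | succ k ih => rw [Function.iterate_succ_apply']; exact step _ ih
  obtain ⟨k, hk⟩ := h v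
  apply all k
  rw [hk, hp, hq]

theorem parG_surj {V : Type*} (T : SimpleGraph V) (hT : T.IsTree) (r : V) :
    ∃ p : V → V, p r = r ∧ (∀ v, ∃ k, p^[k] v = r) ∧ parG p = T := by
  classical
  have h1 : ∀ v, ∃ w, (v = r → w = r) ∧ (v ≠ r → T.Adj v w ∧ T.dist w r < T.dist v r) := by
    intro v
    by_cases hv : v = r
    · exact ⟨r, fun _ => rfl, fun h => absurd hv h⟩
    · obtain ⟨w, hw⟩ := (hT.connected v r).exists_walk_length_eq_dist
      cases w with
      | nil => exact absurd rfl hv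
      | cons hadj w =>
        refine ⟨_, fun h => absurd h hv, fun _ => ⟨hadj, ?_⟩⟩
        have := SimpleGraph.dist_le w
        simp at hw
        omega
  choose p hp1 hp2 using h1
  have hr : ∀ n v, T.dist v r ≤ n → ∃ k, p^[k] v = r := by
    intro n
    induction n with
    | zero =>
      intro v hv
      refine ⟨0, ?_⟩
      exact (hT.connected.dist_eq_zero_iff).1 (Nat.le_zero.1 hv)
    | succ n ih =>
      intro v hv
      by_cases hvr : v = r
      · exact ⟨0, hvr⟩
      · obtain ⟨k, hk⟩ := ih (p v) (by have := (hp2 v hvr).2; omega)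
        exact ⟨k+1, hk⟩
  have hr' : ∀ v, ∃ k, p^[k] v = r := fun v => hr _ v le_rfl
  refine ⟨p, hp1 r rfl, hr', ?_⟩
  have hle : parG p ≤ T := by
    have aux : ∀ a b, a ≠ b → p a = b → T.Adj a b := by
      intro a b hab hpa
      have : a ≠ r := by
        intro h; apply hab; rw [← hpa, hp1 a h, h]
      rw [← hpa]; exact (hp2 a this).1
    intro a b hab
    rw [parG_adj] at hab
    rcases hab with ⟨hne, h | h⟩
    · exact aux a b hne h
    · exact (aux b a hne.symm h).symm
  exact le_antisymm hle ((SimpleGraph.isTree_iff_minimal_connected.1 hT).2 (parG_conn p r hr') hle)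

/-- Parent function coded by a word: `0` hub, `1` next rim vertex, `2` previous rim vertex. -/
def wpar {m : ℕ} (f : Fin (m+1) → Fin 3) : Fin (m+2) → Fin (m+2) :=
  Fin.cases 0 (fun i => if f i = 0 then 0 else if f i = 1 then (i+1).succ else (i-1).succ)

theorem wpar_zero {m : ℕ} (f : Fin (m+1) → Fin 3) : wpar f 0 = 0 := rfl

theorem wpar_succ {m : ℕ} (f : Fin (m+1) → Fin 3) (i : Fin (m+1)) : wpar f i.succ =
  if f i = 0 then 0 else if f i = 1 then (i+1).succ else (i-1).succ := rfl

/-- Valid words. -/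
def wgood {m : ℕ} (f : Fin (m+1) → Fin 3) : Prop :=
  (∀ i, ¬ (f i = 1 ∧ f (i+1) = 2)) ∧ (∃ i, f i ≠ 1) ∧ (∃ i, f i ≠ 2)

theorem fin3_cases (a : Fin 3) : a = 0 ∨ a = 1 ∨ a = 2 := by
  fin_cases a <;> simp

open scoped Fin.CommRing Fin.NatCast in
theorem cyc_ind {m : ℕ} (P : Fin (m+1) → Prop) (i : Fin (m+1)) (hi : P i)
    (h : ∀ j, P j → P (j+1)) (j : Fin (m+1)) : P j := by
  have : ∀ k : ℕ, P (i + (k : Fin (m+1))) := by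
    intro k
    induction k with
    | zero => simpa using hi
    | succ k ih => rw [Nat.cast_succ, ← add_assoc]; exact h _ ih
  have h2 := this (j - i).val
  rw [Fin.cast_val_eq_self] at h2
  simpa using h2

open scoped Fin.CommRing Fin.NatCast in
theorem wgood_reach {m : ℕ} (f : Fin (m+1) → Fin 3) (hf : wgood f) (v : Fin (m+2)) :
    ∃ k, (wpar f)^[k] v = 0 := by
  obtain ⟨h1, h2, h3⟩ := hf
  have hz : ∃ i, f i = 0 := by
    by_contra! hno
    by_cases hR : ∃ i, f i = 1
    · obtain ⟨i, hi⟩ := hR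
      obtain ⟨j, hj⟩ := h2
      refine hj (cyc_ind (fun j => f j = 1) i hi (fun j hj => ?_) j)
      rcases fin3_cases (f (j+1)) with h | h | h
      · exact absurd h (hno _)
      · exact h
      · exact absurd ⟨hj, h⟩ (h1 j)
    · push Not at hR
      obtain ⟨j, hj⟩ := h3
      rcases fin3_cases (f j) with h | h | h
      · exact hno _ h
      · exact hR _ h
      · exact hj h
  obtain ⟨z, hz⟩ := hz
  have right : ∀ k : ℕ, ∀ i, i + (k : Fin (m+1)) = z → f i ≠ 2 → ∃ t, (wpar f)^[t] i.succ = 0 := by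
    intro k
    induction k with
    | zero =>
      intro i hi _
      refine ⟨1, ?_⟩
      have : i = z := by simpa using hi
      subst this
      simp [wpar_succ, hz]
    | succ k ih =>
      intro i hi hi2
      rcases fin3_cases (f i) with h | h | h
      · exact ⟨1, by simp [wpar_succ, h]⟩
      · obtain ⟨t, ht⟩ := ih (i+1) (by rw [← hi, Nat.cast_succ]; ring) (fun h' => h1 i ⟨h, h'⟩)
        refine ⟨t+1, ?_⟩
        rw [Function.iterate_succ_apply, wpar_succ]
        simpa [h] using ht
      · exact absurd h hi2
  have left : ∀ k : ℕ, ∀ i, i - (k : Fin (m+1)) = z → f i ≠ 1 → ∃ t, (wpar f)^[t] i.succ = 0 := by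
    intro k
    induction k with
    | zero =>
      intro i hi _
      refine ⟨1, ?_⟩
      have : i = z := by simpa using hi
      subst this
      simp [wpar_succ, hz]
    | succ k ih =>
      intro i hi hi2
      rcases fin3_cases (f i) with h | h | h
      · exact ⟨1, by simp [wpar_succ, h]⟩
      · exact absurd h hi2
      · obtain ⟨t, ht⟩ := ih (i-1) (by rw [← hi, Nat.cast_succ]; ring)
          (fun h' => h1 (i-1) ⟨h', by rw [sub_add_cancel]; exact h⟩)
        refine ⟨t+1, ?_⟩
        rw [Function.iterate_succ_apply, wpar_succ]
        simpa [h] using ht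
  induction v using Fin.cases with
  | zero => exact ⟨0, rfl⟩
  | succ i =>
    by_cases h : f i = 2
    · refine left (i - z).val i ?_ (by rw [h]; decide)
      rw [Fin.cast_val_eq_self]; ring
    · refine right (z - i).val i ?_ h
      rw [Fin.cast_val_eq_self]; ring

theorem reach_wgood {m : ℕ} (f : Fin (m+1) → Fin 3)
    (h : ∀ v, ∃ k, (wpar f)^[k] v = 0) : wgood f := by
  have inv : ∀ (S : Fin (m+2) → Prop), (∀ v, S v → S (wpar f v)) → ∀ v, S v → S 0 := by
    intro S hS v hv
    obtain ⟨k, hk⟩ := h v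
    rw [← hk]
    clear hk
    induction k with
    | zero => exact hv
    | succ k ih => rw [Function.iterate_succ_apply']; exact hS _ ih
  refine ⟨?_, ?_, ?_⟩
  · rintro i ⟨h1, h2⟩
    have := no_two_cycle (wpar f) 0 rfl h i.succ (by simp [wpar_succ, h1, h2])
    exact Fin.succ_ne_zero _ this
  · by_contra! hno
    refine inv (fun v => v ≠ 0) (fun v hv => ?_) (Fin.succ 0) (Fin.succ_ne_zero _) rfl
    induction v using Fin.cases with
    | zero => exact absurd rfl hv
    | succ i => simp [wpar_succ, hno]
  · by_contra! hno
    refine inv (fun v => v ≠ 0) (fun v hv => ?_) (Fin.succ 0) (Fin.succ_ne_zero _) rfl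
    induction v using Fin.cases with
    | zero => exact absurd rfl hv
    | succ i => simp [wpar_succ, hno]

theorem fin_succ_iff {m : ℕ} (i j : Fin (m+1)) :
    j = i + 1 ↔ (i.val + 1 = j.val ∨ (i.val = m ∧ j.val = 0)) := by
  rw [Fin.ext_iff, Fin.val_add_one]
  split_ifs with h
  · subst h
    simp
    have := j.2
    omega
  · have : i.val ≠ m := fun h' => h (Fin.ext h')
    omega

theorem wheel_adj_rim {m : ℕ} (hm : 2 ≤ m) (i j : Fin (m+1)) :
    (wheel (m+1)).Adj i.succ j.succ ↔ j = i + 1 ∨ j = i - 1 := by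
  rw [eq_sub_iff_add_eq, eq_comm (b := i), fin_succ_iff, fin_succ_iff]
  simp only [wheel, SimpleGraph.fromRel_adj, ne_eq, Fin.val_succ, Fin.ext_iff, Fin.val_zero]
  omega

theorem wheel_adj_hub {m : ℕ} (i : Fin (m+1)) :
    (wheel (m+1)).Adj i.succ 0 := by
  simp [wheel]

theorem wpar_le {m : ℕ} (hm : 2 ≤ m) (f : Fin (m+1) → Fin 3) : parG (wpar f) ≤ wheel (m+1) := by
  have aux : ∀ a, a ≠ wpar f a → (wheel (m+1)).Adj a (wpar f a) := by
    intro a ha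
    induction a using Fin.cases with
    | zero => exact absurd rfl ha
    | succ i =>
      rw [wpar_succ]
      split_ifs
      · exact wheel_adj_hub i
      · rw [wheel_adj_rim hm]; simp
      · rw [wheel_adj_rim hm]; simp
  intro a b hab
  rw [parG_adj] at hab
  rcases hab with ⟨hne, rfl | rfl⟩
  · exact aux _ hne
  · exact (aux _ hne.symm).symm

theorem fin_ne {m : ℕ} (hm : 2 ≤ m) (i : Fin (m+1)) : i + 1 ≠ i - 1 := by
  intro h
  rw [eq_sub_iff_add_eq, eq_comm, fin_succ_iff, Fin.val_add_one] at h
  have := i.2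
  split_ifs at h with hl
  · subst hl; simp at h; omega
  · omega

theorem wpar_inj {m : ℕ} (hm : 2 ≤ m) (f g : Fin (m+1) → Fin 3) (h : wpar f = wpar g) : f = g := by
  funext i
  have h1 := congrFun h i.succ
  rw [wpar_succ, wpar_succ] at h1
  have h2 := fin_ne hm i
  rcases fin3_cases (f i) with hf | hf | hf <;> rcases fin3_cases (g i) with hg | hg | hg <;>
    simp [hf, hg, h2, h2.symm, Fin.succ_ne_zero, (Fin.succ_ne_zero _).symm] at h1 ⊢

theorem wpar_surj {m : ℕ} (hm : 2 ≤ m) (p : Fin (m+2) → Fin (m+2)) (h0 : p 0 = 0)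
    (h : ∀ v, ∃ k, p^[k] v = 0) (hle : parG p ≤ wheel (m+1)) : ∃ f, wpar f = p := by
  have key : ∀ i : Fin (m+1), ∃ c : Fin 3,
      (if c = 0 then 0 else if c = 1 then (i+1).succ else (i-1).succ) = p i.succ := by
    intro i
    have hne : i.succ ≠ p i.succ := by
      intro h'
      exact Fin.succ_ne_zero _ (no_two_cycle p 0 h0 h i.succ (by rw [← h', ← h']))
    have hadj := hle ((parG_adj p _ _).2 ⟨hne, Or.inl rfl⟩)
    generalize p i.succ = w at *
    induction w using Fin.cases with
    | zero => exact ⟨0, by simp⟩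
    | succ j =>
      rw [wheel_adj_rim hm] at hadj
      rcases hadj with rfl | rfl
      · exact ⟨1, by simp⟩
      · exact ⟨2, by simp⟩
  choose f hf using key
  refine ⟨f, ?_⟩
  funext v
  induction v using Fin.cases with
  | zero => exact h0.symm
  | succ i => exact hf i

/-- For n ≥ 3, the number of spanning trees of the wheel graph on n+1 vertices
is L(2n) − 2. -/
theorem stmt_4 (n : ℕ) (hn : 3 ≤ n) :
    Nat.card {H : (wheel n).Subgraph // H.IsSpanning ∧ H.coe.IsTree} =
      lucas (2 * n) - 2 := by
  obtain ⟨m, rfl⟩ : ∃ m, n = m + 1 := ⟨n - 1, by omega⟩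
  have hm : 2 ≤ m := by omega
  rw [← wcount2]
  symm
  change Nat.card {f : Fin (m+1) → Fin 3 // wgood f} = _
  have hsp : ∀ f : Fin (m+1) → Fin 3,
      (SimpleGraph.toSubgraph (parG (wpar f)) (wpar_le hm f)).IsSpanning :=
    fun f => SimpleGraph.toSubgraph.isSpanning _ _
  refine Nat.card_eq_of_bijective (fun f =>
    ⟨SimpleGraph.toSubgraph (parG (wpar f.1)) (wpar_le hm f.1), hsp f.1, ?_⟩) ⟨?_, ?_⟩
  · rw [← (SimpleGraph.Subgraph.spanningCoeEquivCoeOfSpanning _ (hsp f.1)).isTree_iff]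
    exact parG_tree _ 0 rfl (wgood_reach f.1 f.2)
  · intro f g hfg
    have h1 := congrArg (fun H => H.1.spanningCoe) hfg
    exact Subtype.ext (wpar_inj hm _ _ (parG_inj _ _ 0 rfl rfl (wgood_reach g.1 g.2) h1))
  · rintro ⟨H, hs, ht⟩
    rw [← (SimpleGraph.Subgraph.spanningCoeEquivCoeOfSpanning _ hs).isTree_iff] at ht
    obtain ⟨p, h0, hr, hp⟩ := parG_surj _ ht 0
    obtain ⟨f, rfl⟩ := wpar_surj hm p h0 hr (by rw [hp]; exact H.spanningCoe_le)
    refine ⟨⟨f, reach_wgood f hr⟩, ?_⟩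
    apply Subtype.ext
    apply SimpleGraph.Subgraph.ext
    · exact (SimpleGraph.Subgraph.isSpanning_iff.1 hs).symm
    · funext a b
      have := congrArg (fun G => G.Adj a b) hp
      simpa using this
end

section
/- Let m ≥ 4 be even and n ≥ 3. Then there exists an integer z > 1 such that (z : ℝ) = ∏_{h=1}^{n−1} ∏_{k=1}^{m/2−1} (4·sin²(hπ/n) + 4·sin²(kπ/m)); that is, the double product of the real numbers 4 sin²(hπ/n) + 4 sin²(kπ/m) over 1 ≤ h ≤ n−1 and 1 ≤ k ≤ m/2 − 1 is an integer greater than one. -/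
open Real Finset

theorem aux_S_eval (N : ℕ) (x : ℝ) :
    (Polynomial.Chebyshev.S ℝ N).eval x
      = ∏ k ∈ Finset.range N, (x - 2 * Real.cos ((k + 1) * π / (N + 1))) := by
  have hU := Polynomial.Chebyshev.roots_U_real N
  have hinj : Set.InjOn (fun k : ℕ => Real.cos ((k + 1) * π / (N + 1))) (Finset.range N) :=
    (Finset.range N).nodup_map_iff_injOn.mp (Polynomial.Chebyshev.roots_U_real_nodup N)
  have hcard : (Polynomial.Chebyshev.U ℝ N).roots.card
      = (Polynomial.Chebyshev.U ℝ N).natDegree := by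
    rw [hU, Polynomial.Chebyshev.natDegree_U_natCast, Finset.card_val,
      Finset.card_image_of_injOn hinj, Finset.card_range]
  have h1 := Polynomial.C_leadingCoeff_mul_prod_multiset_X_sub_C hcard
  rw [hU, Polynomial.Chebyshev.leadingCoeff_U_natCast] at h1
  have h2 : (Polynomial.Chebyshev.S ℝ N).eval x = (Polynomial.Chebyshev.U ℝ N).eval (x / 2) := by
    rw [← Polynomial.Chebyshev.S_comp_two_mul_X]
    simp [Polynomial.eval_comp, mul_div_cancel₀]
  have h3 : (Multiset.map (fun a : ℝ => (Polynomial.X - Polynomial.C a))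
      ((Finset.range N).image (fun k : ℕ => Real.cos ((k + 1) * π / (N + 1)))).val).prod
      = ∏ k ∈ Finset.range N,
        (Polynomial.X - Polynomial.C (Real.cos ((k + 1) * π / (N + 1)))) := by
    change ∏ a ∈ (Finset.range N).image _, _ = _
    rw [Finset.prod_image hinj]
  rw [h3] at h1
  rw [h2, ← h1]
  have h4 : (2 : ℝ) ^ N = ∏ k ∈ Finset.range N, (2 : ℝ) := by simp
  simp only [Polynomial.eval_mul, Polynomial.eval_C, Polynomial.eval_prod, Polynomial.eval_sub,
    Polynomial.eval_X, h4, ← Finset.prod_mul_distrib]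
  refine Finset.prod_congr rfl fun k _ => ?_
  ring

theorem aux_S_prod (N : ℕ) :
    Polynomial.Chebyshev.S ℝ N
      = ∏ k ∈ Finset.range N,
        (Polynomial.X - Polynomial.C (2 * Real.cos ((k + 1) * π / (N + 1)))) := by
  refine Polynomial.funext fun x => ?_
  rw [aux_S_eval]
  simp [Polynomial.eval_prod]

theorem aux_int (N : ℕ) (G : Polynomial ℤ) :
    ∃ z : ℤ, (z : ℝ) = ∏ k ∈ Finset.range N,
      (G.map (Int.castRingHom ℝ)).eval (2 * Real.cos ((k + 1) * π / (N + 1))) := by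
  have hle : (G.map (Int.castRingHom ℝ)).natDegree ≤ G.natDegree := Polynomial.natDegree_map_le
  have h := Polynomial.resultant_prod_left (Finset.range N)
    (fun k : ℕ => (Polynomial.X - Polynomial.C (2 * Real.cos ((k + 1) * π / (N + 1)))))
    (G.map (Int.castRingHom ℝ)) G.natDegree
    (by simp only [Polynomial.leadingCoeff_X_sub_C, Finset.prod_const_one]; exact one_ne_zero) hle
  rw [← aux_S_prod, ← Polynomial.Chebyshev.map_S (Int.castRingHom ℝ),
    Polynomial.resultant_map_map] at h
  refine ⟨_, h.trans ?_⟩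
  refine Finset.prod_congr rfl fun k _ => ?_
  rw [Polynomial.natDegree_X_sub_C, Polynomial.resultant_X_sub_C_left _ _ _ hle]

theorem aux_prod_Icc (N : ℕ) (f : ℕ → ℝ) :
    ∏ k ∈ Finset.Icc 1 N, f k = ∏ k ∈ Finset.range N, f (k + 1) := by
  induction N with
  | zero => simp
  | succ N ih => rw [Finset.prod_Icc_succ_top (by omega), ih, Finset.prod_range_succ]

/-- For m ≥ 4 even and n ≥ 3, the double product
∏_{h=1}^{n−1} ∏_{k=1}^{m/2−1} (4 sin²(hπ/n) + 4 sin²(kπ/m))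
is an integer greater than one. -/
theorem stmt_5 (m n : ℕ) (hm : 4 ≤ m) (hme : Even m) (hn : 3 ≤ n) :
    ∃ z : ℤ, 1 < z ∧
      (z : ℝ) = ∏ h ∈ Finset.Icc 1 (n - 1), ∏ k ∈ Finset.Icc 1 (m / 2 - 1),
        (4 * Real.sin (h * Real.pi / n) ^ 2 + 4 * Real.sin (k * Real.pi / m) ^ 2) := by
  obtain ⟨a, rfl⟩ : ∃ a, m = 2 * (a + 2) := by
    obtain ⟨r, hr⟩ := hme
    exact ⟨r - 2, by omega⟩
  obtain ⟨b, rfl⟩ : ∃ b, n = b + 3 := ⟨n - 3, by omega⟩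
  have e1 : 2 * (a + 2) / 2 - 1 = a + 1 := by omega
  have e2 : b + 3 - 1 = b + 2 := by omega
  rw [e1, e2]
  have inner (t : ℝ) : ∏ k ∈ Finset.Icc 1 (a + 1),
      (t + 4 * Real.sin (k * Real.pi / (2 * (a + 2) : ℕ)) ^ 2)
      = (Polynomial.Chebyshev.S ℝ (a + 1 : ℕ)).eval (t + 2) := by
    rw [aux_prod_Icc, aux_S_eval]
    refine Finset.prod_congr rfl fun k _ => ?_
    have : ((k : ℝ) + 1) * π / ((a + 1 : ℕ) + 1)
        = 2 * (((k + 1 : ℕ) : ℝ) * π / (2 * (a + 2) : ℕ)) := by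
      push_cast
      field_simp
      ring
    rw [this, Real.cos_two_mul, Real.cos_sq']
    ring
  have mono (t : ℝ) (ht : 0 ≤ t) :
      (2 : ℝ) ≤ (Polynomial.Chebyshev.S ℝ (a + 1 : ℕ)).eval (t + 2) := by
    have h0 : (2 : ℝ) ≤ (Polynomial.Chebyshev.S ℝ (a + 1 : ℕ)).eval (0 + 2) := by
      rw [zero_add, Polynomial.Chebyshev.S_eval_two]
      push_cast
      linarith [(Nat.cast_nonneg a : (0 : ℝ) ≤ a)]
    refine h0.trans ?_
    rw [← inner, ← inner]
    refine Finset.prod_le_prod (fun k _ => by positivity) (fun k _ => by linarith)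
  simp only [inner]
  obtain ⟨z, hz⟩ := aux_int (b + 2)
    ((Polynomial.Chebyshev.S ℤ (a + 1 : ℕ)).comp (6 - Polynomial.X ^ 2))
  have hz' : (z : ℝ) = ∏ h ∈ Finset.Icc 1 (b + 2),
      (Polynomial.Chebyshev.S ℝ (a + 1 : ℕ)).eval
        (4 * Real.sin (h * Real.pi / (b + 3 : ℕ)) ^ 2 + 2) := by
    rw [hz, aux_prod_Icc]
    refine Finset.prod_congr rfl fun k _ => ?_
    rw [Polynomial.map_comp, Polynomial.Chebyshev.map_S, Polynomial.eval_comp]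
    congr 1
    have : ((k : ℝ) + 1) * π / ((b + 2 : ℕ) + 1) = ((k + 1 : ℕ) : ℝ) * π / (b + 3 : ℕ) := by
      push_cast
      ring
    rw [this]
    simp only [Polynomial.map_sub, Polynomial.map_pow, Polynomial.map_X, Polynomial.map_ofNat,
      Polynomial.eval_sub, Polynomial.eval_pow, Polynomial.eval_X, Polynomial.eval_ofNat]
    rw [mul_pow, Real.cos_sq']
    ring
  refine ⟨z, ?_, hz'⟩
  have h2 : (2 : ℝ) ^ (b + 2) ≤ z := by
    rw [hz']
    calc (2 : ℝ) ^ (b + 2) = ∏ h ∈ Finset.Icc 1 (b + 2), (2 : ℝ) := by simp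
      _ ≤ _ := Finset.prod_le_prod (fun _ _ => by norm_num) (fun h _ => mono _ (by positivity))
  have h3 : (1 : ℝ) < 2 ^ (b + 2) := one_lt_pow₀ (by norm_num) (by omega)
  exact_mod_cast h3.trans_le h2
end

section
/- Let m ≥ 4 be even and n ≥ 3 with gcd(m,n) = 1. Then there exists a natural number N that is not prime such that (N : ℝ) = n · ∏_{h=1}^{n−1} ∏_{k=1}^{m/2−1} (4·sin²(hπ/n) + 4·sin²(kπ/m)). (This number is the determinant of THK(m,n), so for m even the Turk's Head Knot THK(m,n) has composite determinant.) -/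
open Real Finset

namespace THK
open Polynomial

lemma S_monic_aux (R : Type) [CommRing R] [Nontrivial R] (n : ℕ) :
    (Chebyshev.S R n).Monic ∧ (Chebyshev.S R n).natDegree = n ∧
    (Chebyshev.S R (n+1 : ℕ)).Monic ∧ (Chebyshev.S R (n+1 : ℕ)).natDegree = n + 1 := by
  induction n with
  | zero => simp [monic_X]
  | succ n ih =>
    obtain ⟨h1, h2, h3, h4⟩ := ih
    refine ⟨h3, h4, ?_⟩
    have e : Chebyshev.S R ((n + 1 + 1 : ℕ) : ℤ)
        = X * Chebyshev.S R ((n + 1 : ℕ) : ℤ) - Chebyshev.S R (n : ℤ) := by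
      have := Chebyshev.S_add_two R (n : ℤ)
      push_cast
      rw [← this]
      congr 1
    have hm : (X * Chebyshev.S R ((n + 1 : ℕ) : ℤ)).Monic := monic_X.mul h3
    have hd : (X * Chebyshev.S R ((n + 1 : ℕ) : ℤ)).natDegree = n + 1 + 1 := by
      rw [monic_X.natDegree_mul h3, h4, natDegree_X]; ring
    have hlt : (Chebyshev.S R (n : ℤ)).degree < (X * Chebyshev.S R ((n + 1 : ℕ) : ℤ)).degree := by
      apply degree_lt_degree
      rw [hd, h2]; omega
    rw [e]
    refine ⟨hm.sub_of_left hlt, ?_⟩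
    rw [natDegree_sub_eq_left_of_natDegree_lt (by rw [hd, h2]; omega), hd]

lemma S_prod (n : ℕ) : Chebyshev.S ℝ n =
    ∏ k ∈ Finset.range n, (X - C (2 * Real.cos ((k + 1) * π / (n + 1)))) := by
  have h := S_monic_aux ℝ n
  have hinj : Set.InjOn (fun k : ℕ => 2 * Real.cos ((k + 1) * π / (n + 1)))
      (Finset.range n : Set ℕ) := by
    have := (Finset.range n).nodup_map_iff_injOn.mp (Chebyshev.roots_U_real_nodup n)
    intro a ha b hb hab
    apply this ha hb
    simpa using hab
  have hroot : ∀ k ∈ Finset.range n,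
      (Chebyshev.S ℝ n).eval (2 * Real.cos ((k + 1) * π / (n + 1))) = 0 := by
    intro k hk
    have hk' : (k : ℝ) + 1 < n + 1 := by
      have := Finset.mem_range.mp hk
      exact_mod_cast Nat.succ_lt_succ this
    have h1 := Chebyshev.S_two_mul_real_cos ((k + 1) * π / (n + 1)) (n : ℤ)
    have h2 : Real.sin ((((n : ℤ) : ℝ) + 1) * ((k + 1) * π / (n + 1))) = 0 := by
      have : (((n : ℤ) : ℝ) + 1) * ((k + 1) * π / (n + 1)) = ((k + 1 : ℕ) : ℝ) * π := by
        push_cast; field_simp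
      rw [this]; exact Real.sin_nat_mul_pi _
    rw [h2] at h1
    rcases mul_eq_zero.mp h1 with h1 | h1
    · exact h1
    · exfalso
      apply (Real.sin_pos_of_pos_of_lt_pi (by positivity) ?_).ne' h1
      rw [div_lt_iff₀ (by positivity)]
      nlinarith [Real.pi_pos]
  have hpm : (∏ k ∈ Finset.range n, (X - C (2 * Real.cos ((k + 1) * π / (n + 1))) : ℝ[X])).Monic :=
    monic_prod_of_monic _ _ fun i _ => monic_X_sub_C _
  have hpd : (∏ k ∈ Finset.range n,
      (X - C (2 * Real.cos ((k + 1) * π / (n + 1))) : ℝ[X])).natDegree = n := by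
    rw [natDegree_prod_of_monic _ _ fun i _ => monic_X_sub_C _]
    simp only [natDegree_X_sub_C, Finset.sum_const, Finset.card_range, smul_eq_mul, mul_one]
  refine eq_of_degree_sub_lt_of_eval_index_eq (Finset.range n) hinj ?_ ?_
  · have hd1 := degree_eq_natDegree h.1.ne_zero
    have hd2 := degree_eq_natDegree hpm.ne_zero
    rw [h.2.1] at hd1
    rw [hpd] at hd2
    rw [Finset.card_range, ← hd1]
    exact degree_sub_lt_left (hd1.trans hd2.symm) h.1.ne_zero (by rw [h.1.leadingCoeff, hpm.leadingCoeff])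
  · intro k hk
    rw [hroot k hk, eval_prod, eq_comm]
    exact Finset.prod_eq_zero hk (by simp)

/-- the product is an integer -/
lemma int_prod (a b : ℕ) : ∃ z : ℤ, (z : ℝ) = ∏ h ∈ Finset.range a, ∏ k ∈ Finset.range b,
    (6 - (2 * Real.cos ((h + 1) * π / (a + 1))) ^ 2 - 2 * Real.cos ((k + 1) * π / (b + 1))) := by
  let f : ℤ[X] := Chebyshev.S ℤ a
  let g : ℤ[X] := (Chebyshev.S ℤ b).comp (6 - X ^ 2)
  refine ⟨resultant f g a g.natDegree, ?_⟩
  have h1 := resultant_map_map f g a g.natDegree (Int.castRingHom ℝ)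
  have hf : f.map (Int.castRingHom ℝ) = Chebyshev.S ℝ a := Chebyshev.map_S _ _
  have hg : g.map (Int.castRingHom ℝ) = (Chebyshev.S ℝ b).comp (6 - X ^ 2) := by
    simp [g, Polynomial.map_comp, Chebyshev.map_S]
  have hs := S_monic_aux ℝ a
  have h2 := resultant_eq_prod_eval (f.map (Int.castRingHom ℝ)) (g.map (Int.castRingHom ℝ))
    g.natDegree natDegree_map_le
    (by rw [hf, S_prod]; exact Splits.prod fun i _ => Splits.X_sub_C _)
  have hr : (Chebyshev.S ℝ a).roots =
      (Finset.range a).val.map (fun k : ℕ => 2 * Real.cos ((k + 1) * π / (a + 1))) := by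
    rw [S_prod]
    exact roots_multiset_prod_X_sub_C
      ((Finset.range a).val.map (fun k : ℕ => 2 * Real.cos ((k + 1) * π / (a + 1)))) ▸ by
        simp [Finset.prod, Multiset.map_map]
  rw [hf, hs.2.1, hs.1.leadingCoeff, ← hf, h1, hf, hr, hg] at h2
  rw [eq_intCast] at h2
  rw [h2, one_pow, one_mul, Multiset.map_map]
  show ∏ h ∈ Finset.range a, _ = _
  refine Finset.prod_congr rfl fun h _ => ?_
  simp only [Function.comp, eval_comp]
  rw [S_prod, eval_prod]
  simp

lemma lower (b : ℕ) (y : ℝ) (hy : 0 ≤ y) : (b : ℝ) + 1 ≤ ∏ k ∈ Finset.range b,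
    (y + (2 - 2 * Real.cos ((k + 1) * π / (b + 1)))) := by
  have h := Chebyshev.S_eval_two ℝ (b : ℤ)
  rw [S_prod, eval_prod] at h
  simp only [eval_sub, eval_X, eval_C, Int.cast_natCast] at h
  refine h.symm.le.trans ?_
  refine Finset.prod_le_prod (fun k _ => ?_) fun k _ => by linarith
  linarith [Real.cos_le_one ((k + 1) * π / (b + 1))]

end THK

/-- For m ≥ 4 even and n ≥ 3 with gcd(m,n) = 1, the determinant
n · ∏_{h=1}^{n−1} ∏_{k=1}^{m/2−1} (4 sin²(hπ/n) + 4 sin²(kπ/m))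
of THK(m,n) is a natural number that is not prime. -/
theorem stmt_6 (m n : ℕ) (hm : 4 ≤ m) (hme : Even m) (hn : 3 ≤ n)
    (hgcd : Nat.gcd m n = 1) :
    ∃ N : ℕ, ¬ Nat.Prime N ∧
      (N : ℝ) = n * ∏ h ∈ Finset.Icc 1 (n - 1), ∏ k ∈ Finset.Icc 1 (m / 2 - 1),
        (4 * Real.sin (h * Real.pi / n) ^ 2 + 4 * Real.sin (k * Real.pi / m) ^ 2) := by
  obtain ⟨b, rfl⟩ : ∃ b, m = 2 * (b + 1) := by
    obtain ⟨r, hr⟩ := hme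
    exact ⟨r - 1, by omega⟩
  obtain ⟨a, rfl⟩ : ∃ a, n = a + 1 := ⟨n - 1, by omega⟩
  have hb : 1 ≤ b := by omega
  have hshift : ∀ (c : ℕ) (f : ℕ → ℝ),
      ∏ h ∈ Finset.Icc 1 c, f h = ∏ h ∈ Finset.range c, f (h + 1) := by
    intro c f
    rw [Finset.range_eq_Ico, Finset.prod_Ico_add' f 0 c 1]
    rfl
  have e1 : a + 1 - 1 = a := by omega
  have e2 : 2 * (b + 1) / 2 - 1 = b := by omega
  rw [e1, e2, hshift]
  simp_rw [hshift]
  have hs1 : ∀ x : ℝ, 4 * Real.sin x ^ 2 = 4 - (2 * Real.cos x) ^ 2 := by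
    intro x; nlinarith [Real.sin_sq_add_cos_sq x]
  have hs2 : ∀ k : ℕ, 4 * Real.sin (((k + 1 : ℕ) : ℝ) * π / ((2 * (b + 1) : ℕ) : ℝ)) ^ 2
      = 2 - 2 * Real.cos ((k + 1) * π / (b + 1)) := by
    intro k
    have : ((k : ℝ) + 1) * π / (b + 1)
        = 2 * (((k + 1 : ℕ) : ℝ) * π / ((2 * (b + 1) : ℕ) : ℝ)) := by
      push_cast; field_simp
    rw [this, Real.cos_two_mul, hs1]; ring
  obtain ⟨z, hz⟩ := THK.int_prod a b
  have hP : ∏ h ∈ Finset.range a, ∏ k ∈ Finset.range b,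
      (4 * Real.sin (((h + 1 : ℕ) : ℝ) * π / ((a + 1 : ℕ) : ℝ)) ^ 2
        + 4 * Real.sin (((k + 1 : ℕ) : ℝ) * π / ((2 * (b + 1) : ℕ) : ℝ)) ^ 2) = (z : ℝ) := by
    rw [hz]
    refine Finset.prod_congr rfl fun h _ => Finset.prod_congr rfl fun k _ => ?_
    rw [hs2, hs1]; push_cast; ring
  have hlow : (2 : ℝ) ≤ z := by
    rw [← hP]
    calc (2 : ℝ) ≤ 2 ^ a := by
          calc (2 : ℝ) = 2 ^ 1 := by norm_num
            _ ≤ 2 ^ a := pow_le_pow_right₀ (by norm_num) (by omega)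
      _ = ∏ h ∈ Finset.range a, (2 : ℝ) := by simp
      _ ≤ _ := by
        refine Finset.prod_le_prod (fun _ _ => by norm_num) fun h _ => ?_
        simp_rw [hs2]
        refine le_trans ?_ (THK.lower b _ (by positivity))
        have : (1 : ℝ) ≤ b := by exact_mod_cast hb
        linarith
  have hz2 : 2 ≤ z := by exact_mod_cast hlow
  have hz0 : 0 ≤ z := by omega
  lift z to ℕ using hz0
  refine ⟨(a + 1) * z, Nat.not_prime_mul (by omega) (by omega), ?_⟩
  rw [hP]
  push_cast
  ring
end

section
/- For every m ≥ 2, every complex root z of the polynomial d_m is a positive real number; that is, if the evaluation of d_m (with coefficients coerced to ℂ) at z is 0, then z has imaginary part 0 and real part strictly greater than 0. -/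
open Polynomial

/-- The polynomials d_m: d_2 = 1 − X, d_3 = 1 − 3X + X²,
d_{m+1} = (1 − X)·d_m − X·d_{m−1} for m ≥ 3. -/
noncomputable def dpoly : ℕ → Polynomial ℤ
  | 0 => 0
  | 1 => 0
  | 2 => 1 - X
  | 3 => 1 - 3 * X + X ^ 2
  | (m + 4) => (1 - X) * dpoly (m + 3) - X * dpoly (m + 2)

theorem dpoly_aux (z a b : ℂ) (h1 : a + b = 1 - z) (h2 : a * b = z) (n : ℕ) :
    (a - b) * aeval z (dpoly (n + 2)) = a ^ (n + 2) - b ^ (n + 2) ∧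
    (a - b) * aeval z (dpoly (n + 3)) = a ^ (n + 3) - b ^ (n + 3) := by
  induction n with
  | zero =>
    constructor
    · simp only [dpoly, map_sub, map_one, aeval_X]
      rw [← h1]; ring
    · simp only [dpoly, map_sub, map_one, map_add, map_mul, map_pow, aeval_X, map_ofNat]
      have : 1 - 3 * z + z ^ 2 = (a + b) ^ 2 - a * b := by rw [h1, h2]; ring
      rw [this]; ring
  | succ n ih =>
    obtain ⟨i1, i2⟩ := ih
    refine ⟨i2, ?_⟩
    have e : dpoly (n + 1 + 3) = (1 - X) * dpoly (n + 3) - X * dpoly (n + 2) := by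
      rw [show n + 1 + 3 = n + 4 from rfl, dpoly]
    rw [e]
    simp only [map_sub, map_one, map_mul, aeval_X]
    rw [← h1]
    have : (a - b) * ((a + b) * aeval z (dpoly (n + 3)) - z * aeval z (dpoly (n + 2)))
      = (a + b) * ((a - b) * aeval z (dpoly (n + 3)))
        - z * ((a - b) * aeval z (dpoly (n + 2))) := by ring
    rw [this, i1, i2, ← h2]; ring

theorem dpoly_zero_aux (n : ℕ) : aeval (0 : ℂ) (dpoly (n + 2)) = 1 ∧
    aeval (0 : ℂ) (dpoly (n + 3)) = 1 := by
  induction n with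
  | zero => simp [dpoly]
  | succ n ih =>
    refine ⟨ih.2, ?_⟩
    have e : dpoly (n + 1 + 3) = (1 - X) * dpoly (n + 3) - X * dpoly (n + 2) := by
      rw [show n + 1 + 3 = n + 4 from rfl, dpoly]
    rw [e]
    simp only [map_sub, map_one, map_mul, aeval_X, ih.2]
    simp

/-- For m ≥ 2, every complex root of d_m is a positive real number. -/
theorem stmt_7 (m : ℕ) (hm : 2 ≤ m) (z : ℂ) (hz : Polynomial.aeval z (dpoly m) = 0) :
    z.im = 0 ∧ 0 < z.re := by
  obtain ⟨n, rfl⟩ := Nat.exists_eq_add_of_le' hm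
  have hz0 : z ≠ 0 := by
    rintro rfl
    rw [(dpoly_zero_aux n).1] at hz
    exact one_ne_zero hz
  obtain ⟨s, hs⟩ := IsAlgClosed.exists_pow_nat_eq ((1 - z) ^ 2 - 4 * z) (n := 2) (by norm_num)
  obtain ⟨a, b, h1, h2⟩ : ∃ a b : ℂ, a + b = 1 - z ∧ a * b = z :=
    ⟨(1 - z + s) / 2, (1 - z - s) / 2, by ring, by linear_combination (-1 / 4) * hs⟩
  have h := (dpoly_aux z a b h1 h2 n).1
  rw [hz, mul_zero] at h
  have hab : a ^ (n + 2) = b ^ (n + 2) := (sub_eq_zero.mp h.symm)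
  have hn : ‖a‖ = ‖b‖ := by
    have := congrArg norm hab
    rw [norm_pow, norm_pow] at this
    exact (pow_left_inj₀ (norm_nonneg _) (norm_nonneg _) (by omega)).mp this
  have ha0 : a ≠ 0 := by
    rintro rfl
    exact hz0 (by rw [← h2, zero_mul])
  have hN : 0 < ‖a‖ ^ 2 := by positivity
  have ea := Complex.mul_conj' a
  have eb := Complex.mul_conj' b
  rw [← hn] at eb
  have c1 := congrArg (starRingEnd ℂ) h1
  simp only [map_add, map_sub, map_one] at c1
  have c2 := congrArg (starRingEnd ℂ) h2
  simp only [map_mul] at c2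
  generalize hM : ‖a‖ ^ 2 = N at *
  have hM' : (‖a‖ : ℂ) ^ 2 = (N : ℂ) := by rw [← hM]; push_cast; rfl
  rw [hM'] at ea eb
  have zz : z * starRingEnd ℂ z = (N : ℂ) ^ 2 := by
    rw [← c2, ← h2]
    linear_combination (b * starRingEnd ℂ b) * ea + (N : ℂ) * eb
  have key : (N : ℂ) * (1 - z) = z * (1 - starRingEnd ℂ z) := by
    rw [← c1, ← h1]
    nth_rewrite 1 [← h2]
    linear_combination (-b) * ea - a * eb
  have hne : (1 + N : ℂ) ≠ 0 := by
    have : (1 + N : ℝ) ≠ 0 := by positivity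
    exact_mod_cast this
  have hzN : z = (N : ℂ) := by
    apply mul_right_cancel₀ hne
    linear_combination -key + zz
  rw [hzN]
  exact ⟨Complex.ofReal_im N, by rw [Complex.ofReal_re]; exact hN⟩
end

section
/- For every m ≥ 2, the polynomial d_m, viewed in ℝ[X], has natural degree m − 1 and has m − 1 distinct real roots; that is, the set of real roots of d_m has cardinality m − 1 (so all roots of d_m are real and simple). -/
open Polynomial

theorem dp_step (n : ℕ) : dpoly (n + 4) = (1 - X) * dpoly (n + 3) - X * dpoly (n + 2) := by
  rw [dpoly]

theorem dp_deg (n : ℕ) : (dpoly (n + 2)).natDegree ≤ n + 1 ∧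
    (dpoly (n + 2)).coeff (n + 1) = (-1) ^ (n + 1) := by
  induction n using Nat.twoStepInduction with
  | zero =>
    refine ⟨?_, ?_⟩
    · simp only [dpoly]; compute_degree
    · simp [dpoly, coeff_one]
  | one =>
    refine ⟨?_, ?_⟩
    · simp only [dpoly]; compute_degree
    · simp only [dpoly]
      compute_degree!
  | more n ih1 ih2 =>
    obtain ⟨a1, b1⟩ := ih1
    obtain ⟨a2, b2⟩ := ih2
    rw [dp_step]
    refine ⟨?_, ?_⟩
    · refine (natDegree_sub_le _ _).trans (max_le ?_ ?_)
      · refine natDegree_mul_le.trans ?_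
        have : (1 - X : ℤ[X]).natDegree ≤ 1 := by compute_degree
        have a3 : (dpoly (n + 3)).natDegree ≤ n + 1 + 1 := a2
        omega
      · refine natDegree_mul_le.trans ?_
        have : (X : ℤ[X]).natDegree ≤ 1 := natDegree_X_le
        omega
    · have h1 : (dpoly (n + 3)).coeff (n + 2 + 1) = 0 :=
        coeff_eq_zero_of_natDegree_lt (lt_of_le_of_lt a2 (by omega))
      have h2 : (dpoly (n + 2)).coeff (n + 2) = 0 :=
        coeff_eq_zero_of_natDegree_lt (lt_of_le_of_lt a1 (by omega))
      have h3 : (dpoly (n + 3)).coeff (n + 2) = (-1) ^ (n + 2) := b2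
      rw [sub_mul, one_mul, coeff_sub, coeff_sub, coeff_X_mul, coeff_X_mul, h1, h2, h3]
      ring

theorem dp_sin (s t : ℝ) (h : 1 - s ^ 2 = 2 * s * Real.cos t) (n : ℕ) :
    Real.sin t * aeval (s ^ 2) (dpoly (n + 2)) = s ^ (n + 1) * Real.sin ((n + 2 : ℝ) * t) := by
  induction n using Nat.twoStepInduction with
  | zero =>
    simp only [dpoly, map_sub, map_one, aeval_X, h]
    norm_num [Real.sin_two_mul]
    ring
  | one =>
    have h3 : Real.sin (((1 : ℕ) + 2 : ℝ) * t) = Real.sin t * (4 * Real.cos t ^ 2 - 1) := by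
      norm_num [Real.sin_three_mul]
      linear_combination (4 * Real.sin t) * Real.sin_sq_add_cos_sq t * (-1)
    rw [h3]
    simp only [dpoly, map_sub, map_add, map_mul, map_pow, map_one, aeval_X, map_ofNat]
    linear_combination (Real.sin t) * (1 - s ^ 2 + 2 * s * Real.cos t) * h
  | more n ih1 ih2 =>
    rw [dp_step]
    have e : Real.sin (((n + 2 : ℕ) + 2 : ℝ) * t) =
        2 * Real.cos t * Real.sin (((n + 1 : ℕ) + 2 : ℝ) * t) - Real.sin ((n + 2 : ℝ) * t) := by
      have e1 : ((n + 2 : ℕ) + 2 : ℝ) * t = ((n + 1 : ℕ) + 2 : ℝ) * t + t := by push_cast; ring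
      have e2 : (n + 2 : ℝ) * t = ((n + 1 : ℕ) + 2 : ℝ) * t - t := by push_cast; ring
      rw [e1, e2, Real.sin_add, Real.sin_sub]; ring
    rw [e]
    have ih3 : Real.sin t * aeval (s ^ 2) (dpoly (n + 3)) =
      s ^ (n + 1 + 1) * Real.sin (((n + 1 : ℕ) + 2 : ℝ) * t) := ih2
    simp only [map_sub, map_mul, map_one, aeval_X]
    rw [h]
    linear_combination (2 * s * Real.cos t) * ih3 - s ^ 2 * ih1

noncomputable def dpS (t : ℝ) : ℝ := Real.sqrt (Real.cos t ^ 2 + 1) - Real.cos t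

theorem dpS_eq (t : ℝ) : 1 - dpS t ^ 2 = 2 * dpS t * Real.cos t := by
  have := Real.sq_sqrt (by positivity : 0 ≤ Real.cos t ^ 2 + 1)
  unfold dpS
  linear_combination -this

theorem dpS_pos (t : ℝ) : 0 < dpS t := by
  unfold dpS
  have : Real.cos t < Real.sqrt (Real.cos t ^ 2 + 1) := Real.lt_sqrt_of_sq_lt (by linarith)
  linarith

theorem dpS_inj : Set.InjOn (fun t => dpS t ^ 2) (Set.Icc 0 Real.pi) := by
  intro a ha b hb hab
  have hs : dpS a = dpS b :=
    (pow_left_inj₀ (dpS_pos a).le (dpS_pos b).le two_ne_zero).1 hab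
  apply Real.injOn_cos ha hb
  have h1 := dpS_eq a
  have h2 := dpS_eq b
  rw [hs] at h1
  have := dpS_pos b
  have h3 : 2 * dpS b * Real.cos a = 2 * dpS b * Real.cos b := by rw [← h1, ← h2]
  exact mul_left_cancel₀ (by positivity) h3

/-- For m ≥ 2, d_m viewed in ℝ[X] has degree m − 1 and m − 1 distinct real
roots (all roots of d_m are real and simple). -/
theorem stmt_8 (m : ℕ) (hm : 2 ≤ m) :
    ((dpoly m).map (Int.castRingHom ℝ)).natDegree = m - 1 ∧
      {x : ℝ | Polynomial.aeval x (dpoly m) = 0}.ncard = m - 1 := by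
  obtain ⟨n, rfl⟩ := Nat.exists_eq_add_of_le' hm
  have hd : ((dpoly (n + 2)).map (Int.castRingHom ℝ)).natDegree = n + 1 := by
    rw [natDegree_map_eq_of_injective (RingHom.injective_int (Int.castRingHom ℝ))]
    refine le_antisymm (dp_deg n).1 (le_natDegree_of_ne_zero ?_)
    rw [(dp_deg n).2]
    exact pow_ne_zero _ (by norm_num)
  refine ⟨hd, ?_⟩
  have hne : (dpoly (n + 2)).map (Int.castRingHom ℝ) ≠ 0 := by
    intro h0
    rw [h0] at hd
    simp at hd
  have hset : {x : ℝ | aeval x (dpoly (n + 2)) = 0} =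
      (((dpoly (n + 2)).map (Int.castRingHom ℝ)).roots.toFinset : Set ℝ) := by
    ext x
    rw [Finset.mem_coe, Multiset.mem_toFinset, mem_roots hne, IsRoot.def, eval_map, Set.mem_setOf_eq,
      aeval_def]
    rfl
  have hpi := Real.pi_pos
  have hth : ∀ k ∈ Finset.range (n + 1), 0 < ((k : ℝ) + 1) * Real.pi / (n + 2) ∧
      ((k : ℝ) + 1) * Real.pi / (n + 2) < Real.pi := by
    intro k hk
    have hk' : (k : ℝ) < n + 1 := by exact_mod_cast Finset.mem_range.1 hk
    refine ⟨by positivity, ?_⟩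
    rw [div_lt_iff₀ (by positivity)]
    nlinarith
  rw [hset, Set.ncard_coe_finset]
  refine le_antisymm ?_ ?_
  · exact (Multiset.toFinset_card_le _).trans ((card_roots' _).trans hd.le)
  · have hc := Finset.card_le_card_of_injOn (s := Finset.range (n + 1))
      (t := ((dpoly (n + 2)).map (Int.castRingHom ℝ)).roots.toFinset)
      (fun k : ℕ => dpS (((k : ℝ) + 1) * Real.pi / (n + 2)) ^ 2) ?_ ?_
    · simpa using hc
    · intro k hk
      rw [← hset, Set.mem_setOf_eq]
      obtain ⟨h0, h1⟩ := hth k hk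
      have hsin := Real.sin_pos_of_pos_of_lt_pi h0 h1
      have := dp_sin _ _ (dpS_eq (((k : ℝ) + 1) * Real.pi / (n + 2))) n
      have e : ((n : ℝ) + 2) * (((k : ℝ) + 1) * Real.pi / (n + 2)) = ((k + 1 : ℕ) : ℝ) * Real.pi := by
        push_cast
        field_simp
      rw [e, Real.sin_nat_mul_pi, mul_zero] at this
      exact (mul_eq_zero.1 this).resolve_left hsin.ne'
    · intro j hj k hk hjk
      obtain ⟨h0, h1⟩ := hth k hk
      obtain ⟨h2, h3⟩ := hth j hj
      have := dpS_inj ⟨h2.le, h3.le⟩ ⟨h0.le, h1.le⟩ hjk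
      have hn : (n : ℝ) + 2 ≠ 0 := by positivity
      field_simp at this
      have : (j : ℝ) = k := by linarith
      exact_mod_cast this
end

section
/- For every even m ≥ 2, the evaluation of the polynomial d_m at 1 equals 0, and 1 is a root of d_m of multiplicity exactly one (the root multiplicity of 1 in d_m is 1); hence 1 is a root of g_m = (1 − X)·d_m of multiplicity exactly two. -/
open Polynomial

theorem dpoly_aux_s10 (k : ℕ) : (dpoly (2 * k + 3)).eval 1 = (-1) ^ (k + 1) ∧
    ∃ q : Polynomial ℤ, dpoly (2 * k + 2) = (1 - X) * q ∧ q.eval 1 = (-1) ^ k * (k + 1) := by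
  induction k with
  | zero => exact ⟨by simp [dpoly], 1, by simp [dpoly], by simp⟩
  | succ k ih =>
    obtain ⟨h1, q, hq, h2⟩ := ih
    have e1 : dpoly (2 * (k + 1) + 3) =
        (1 - X) * dpoly (2 * k + 4) - X * dpoly (2 * k + 3) := by
      rw [show 2 * (k + 1) + 3 = (2 * k + 1) + 4 by ring, dpoly]
    have e2 : dpoly (2 * (k + 1) + 2) =
        (1 - X) * dpoly (2 * k + 3) - X * dpoly (2 * k + 2) := by
      rw [show 2 * (k + 1) + 2 = (2 * k) + 4 by ring, dpoly]
    refine ⟨?_, dpoly (2 * k + 3) - X * q, ?_, ?_⟩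
    · rw [e1]; simp [h1]; ring
    · rw [e2, hq]; ring
    · simp [h1, h2]; ring

theorem mult_aux (q : Polynomial ℤ) (h : q ≠ 0) :
    ((1 - X) * q).rootMultiplicity 1 = q.rootMultiplicity 1 + 1 := by
  have e : (1 - X) * q = (-q) * (X - C 1) ^ 1 := by simp; ring
  have h' : -q ≠ 0 := neg_ne_zero.mpr h
  rw [e, rootMultiplicity_mul_X_sub_C_pow h', neg_eq_neg_one_mul, ← C_1, ← C_neg,
    rootMultiplicity_mul (by simpa using h), rootMultiplicity_C, zero_add]

/-- For even m ≥ 2, d_m(1) = 0 and 1 is a root of d_m of multiplicity exactly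
one; hence 1 is a root of g_m = (1 − X)·d_m of multiplicity exactly two. -/
theorem stmt_10 (m : ℕ) (hm : 2 ≤ m) (hme : Even m) :
    (dpoly m).eval 1 = 0 ∧ (dpoly m).rootMultiplicity 1 = 1 ∧
      ((1 - X) * dpoly m).rootMultiplicity 1 = 2 := by
  obtain ⟨j, rfl⟩ := hme
  obtain ⟨k, rfl⟩ : ∃ k, j = k + 1 := ⟨j - 1, by omega⟩
  obtain ⟨-, q, hq, h2⟩ := dpoly_aux_s10 k
  rw [show k + 1 + (k + 1) = 2 * k + 2 by ring, hq]
  have hne : q.eval 1 ≠ 0 := by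
    rw [h2]
    exact mul_ne_zero (pow_ne_zero _ (by norm_num)) (by positivity)
  have hq0 : q ≠ 0 := by rintro rfl; simp at hne
  have hx : (1 - X : Polynomial ℤ) * q ≠ 0 := by
    refine mul_ne_zero (fun h => ?_) hq0
    have := congrArg (eval 0) h
    simp at this
  rw [mult_aux _ hx, mult_aux _ hq0, rootMultiplicity_eq_zero hne]
  simp
end

section
/- For every m ≥ 2 and every k with 0 ≤ k ≤ m − 1, the k-th coefficient of the polynomial d_m equals (−1)^k · D(m−1−k, k), where D denotes the Delannoy numbers; that is, d_m(X) = Σ_{k=0}^{m−1} (−1)^k · D(m−1−k, k) · X^k. -/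
open Polynomial

/-- The Delannoy numbers: D(i,0) = 1, D(0,k) = 1,
D(i+1,k+1) = D(i,k+1) + D(i+1,k) + D(i,k). -/
def delannoy : ℕ → ℕ → ℕ
  | _, 0 => 1
  | 0, _ => 1
  | i + 1, k + 1 => delannoy i (k + 1) + delannoy (i + 1) k + delannoy i k

theorem delannoy_zero_right (i : ℕ) : delannoy i 0 = 1 := by
  cases i <;> simp [delannoy]

theorem delannoy_zero_left (k : ℕ) : delannoy 0 k = 1 := by
  cases k <;> simp [delannoy]

theorem delannoy_succ (i k : ℕ) : delannoy (i + 1) (k + 1) =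
    delannoy i (k + 1) + delannoy (i + 1) k + delannoy i k := by
  simp [delannoy]

theorem dpoly_rec_zero (m : ℕ) : (dpoly (m + 4)).coeff 0 = (dpoly (m + 3)).coeff 0 := by
  simp [dpoly, sub_mul, coeff_sub]

theorem dpoly_rec_succ (m k : ℕ) : (dpoly (m + 4)).coeff (k + 1) =
    (dpoly (m + 3)).coeff (k + 1) - (dpoly (m + 3)).coeff k - (dpoly (m + 2)).coeff k := by
  simp [dpoly, sub_mul, coeff_sub, coeff_X_mul]

theorem dpoly_aux_s11 (n : ℕ) :
    (∀ i k, i + k = n + 1 → (dpoly (n + 2)).coeff k = (-1) ^ k * (delannoy i k : ℤ)) ∧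
    (∀ k, n + 1 < k → (dpoly (n + 2)).coeff k = 0) := by
  induction n using Nat.strong_induction_on with
  | _ n ih =>
  match n, ih with
  | 0, _ =>
    refine ⟨fun i k h => ?_, fun k h => ?_⟩
    · obtain ⟨rfl, rfl⟩ | ⟨rfl, rfl⟩ : (i = 0 ∧ k = 1) ∨ (i = 1 ∧ k = 0) := by omega
      · simp [dpoly, delannoy, coeff_one]
      · simp [dpoly, delannoy]
    · have h1 : k ≠ 0 := by omega
      have h2 : 1 ≠ k := by omega
      simp [dpoly, coeff_one, coeff_X, h1, h2]
  | 1, _ =>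
    have e : dpoly (1 + 2) = 1 - C 3 * X + X ^ 2 := by simp [dpoly]
    rw [e]
    refine ⟨fun i k h => ?_, fun k h => ?_⟩
    · obtain ⟨rfl, rfl⟩ | ⟨rfl, rfl⟩ | ⟨rfl, rfl⟩ :
        (i = 0 ∧ k = 2) ∨ (i = 1 ∧ k = 1) ∨ (i = 2 ∧ k = 0) := by omega
      all_goals
        simp only [coeff_add, coeff_sub, coeff_C_mul, coeff_X, coeff_one, coeff_X_pow]
        simp [delannoy]
    · have h1 : k ≠ 0 := by omega
      have h2 : 1 ≠ k := by omega
      have h3 : k ≠ 2 := by omega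
      simp only [coeff_add, coeff_sub, coeff_C_mul, coeff_X, coeff_one, coeff_X_pow]
      simp [h1, h2, h3]
  | n + 2, ih =>
    obtain ⟨a1, a2⟩ := ih (n + 1) (by omega)
    obtain ⟨b1, b2⟩ := ih n (by omega)
    refine ⟨fun i k h => ?_, fun k h => ?_⟩
    · cases k with
      | zero =>
        have := a1 (n + 2) 0 (by omega)
        rw [dpoly_rec_zero, this, delannoy_zero_right, delannoy_zero_right]
      | succ k =>
        rw [dpoly_rec_succ]
        cases i with
        | zero =>
          rw [a2 (k + 1) (by omega), a1 0 k (by omega), b2 k (by omega)]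
          simp only [delannoy_zero_left]
          push_cast
          ring
        | succ i =>
          rw [a1 i (k + 1) (by omega), a1 (i + 1) k (by omega), b1 i k (by omega), delannoy_succ]
          push_cast
          ring
    · obtain ⟨k, rfl⟩ : ∃ j, k = j + 1 := ⟨k - 1, by omega⟩
      rw [dpoly_rec_succ, a2 (k + 1) (by omega), a2 k (by omega), b2 k (by omega)]
      simp

/-- For m ≥ 2 and 0 ≤ k ≤ m − 1, the k-th coefficient of d_m is
(−1)^k · D(m−1−k, k). -/
theorem stmt_11 (m : ℕ) (hm : 2 ≤ m) (k : ℕ) (hk : k ≤ m - 1) :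
    (dpoly m).coeff k = (-1) ^ k * (delannoy (m - 1 - k) k : ℤ) := by
  obtain ⟨n, rfl⟩ : ∃ n, m = n + 2 := ⟨m - 2, by omega⟩
  exact (dpoly_aux_s11 n).1 _ k (by omega)
end

section
/- For every m ≥ 2, the polynomial d_m is palindromic up to sign: for every k with 0 ≤ k ≤ m − 1, the k-th coefficient of d_m equals (−1)^(m−1) times the (m−1−k)-th coefficient of d_m. -/
open Polynomial

theorem dpoly_rec (m : ℕ) : dpoly (m + 4) = dpoly (m + 3) - X * dpoly (m + 3) - X * dpoly (m + 2) := by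
  rw [dpoly]; ring

def PalAt (n : ℕ) : Prop :=
  (∀ i j, i + j = n + 1 → (dpoly (n + 2)).coeff i = (-1) ^ (n + 1) * (dpoly (n + 2)).coeff j) ∧
  (∀ i, n + 1 < i → (dpoly (n + 2)).coeff i = 0)

theorem pal_step (n : ℕ) (hb : PalAt n) (ha : PalAt (n + 1)) : PalAt (n + 2) := by
  obtain ⟨b1, b2⟩ := hb
  obtain ⟨a1, a2⟩ := ha
  simp only [show n + 1 + 2 = n + 3 from rfl] at a1 a2
  unfold PalAt
  simp only [show n + 2 + 2 = n + 4 from rfl, dpoly_rec]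
  constructor
  · intro i j hij
    rcases i with _ | i
    · obtain rfl : j = (n + 2) + 1 := by omega
      have h1 := a1 0 (n + 2) (by omega)
      have h2 := a2 (n + 2 + 1) (by omega)
      have h3 := b2 (n + 2) (by omega)
      simp only [coeff_sub, coeff_X_mul, coeff_X_mul_zero, h1, h2, h3]
      ring
    · rcases j with _ | j
      · obtain rfl : i = n + 2 := by omega
        have h1 := a1 (n + 2) 0 (by omega)
        have h2 := a2 (n + 2 + 1) (by omega)
        have h3 := b2 (n + 2) (by omega)
        simp only [coeff_sub, coeff_X_mul, coeff_X_mul_zero, h1, h2, h3]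
        ring
      · have h1 := a1 (i + 1) j (by omega)
        have h2 := a1 i (j + 1) (by omega)
        have h3 := b1 i j (by omega)
        simp only [coeff_sub, coeff_X_mul, h1, h2, h3]
        ring
  · intro i hi
    rcases i with _ | i
    · omega
    · simp only [coeff_sub, coeff_X_mul]
      rw [a2 (i + 1) (by omega), a2 i (by omega), b2 i (by omega)]
      ring

theorem pal_zero : PalAt 0 := by
  have e : dpoly (0 + 2) = 1 - X := by simp [dpoly]
  unfold PalAt
  rw [e]
  constructor
  · intro i j h
    have : (i = 0 ∧ j = 1) ∨ (i = 1 ∧ j = 0) := by omega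
    rcases this with ⟨rfl, rfl⟩ | ⟨rfl, rfl⟩ <;> simp [coeff_one, coeff_X]
  · intro i h
    have h0 : i ≠ 0 := by omega
    have h1 : 1 ≠ i := by omega
    simp [coeff_one, coeff_X, h0, h1]

theorem pal_one : PalAt 1 := by
  have e : dpoly (1 + 2) = 1 - C 3 * X + X ^ 2 := by simp [dpoly]
  unfold PalAt
  rw [e]
  constructor
  · intro i j h
    have : (i = 0 ∧ j = 2) ∨ (i = 1 ∧ j = 1) ∨ (i = 2 ∧ j = 0) := by omega
    rcases this with ⟨rfl, rfl⟩ | ⟨rfl, rfl⟩ | ⟨rfl, rfl⟩ <;>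
      simp only [coeff_add, coeff_sub, coeff_C_mul, coeff_one, coeff_X, coeff_X_pow] <;> norm_num
  · intro i h
    have h0 : i ≠ 0 := by omega
    have h1 : 1 ≠ i := by omega
    have h2 : i ≠ 2 := by omega
    simp only [coeff_add, coeff_sub, coeff_C_mul, coeff_one, coeff_X, coeff_X_pow, h0, h1, h2]
    norm_num

theorem pal_all (n : ℕ) : PalAt n ∧ PalAt (n + 1) := by
  induction n with
  | zero => exact ⟨pal_zero, pal_one⟩
  | succ n ih => exact ⟨ih.2, pal_step n ih.1 ih.2⟩

/-- For m ≥ 2, d_m is palindromic up to sign: for 0 ≤ k ≤ m − 1, the k-th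
coefficient of d_m equals (−1)^(m−1) times the (m−1−k)-th coefficient. -/
theorem stmt_12 (m : ℕ) (hm : 2 ≤ m) (k : ℕ) (hk : k ≤ m - 1) :
    (dpoly m).coeff k = (-1) ^ (m - 1) * (dpoly m).coeff (m - 1 - k) := by
  obtain ⟨n, rfl⟩ := Nat.exists_eq_add_of_le' hm
  exact (pal_all n).1.1 k (n + 2 - 1 - k) (by omega)
end

section
/- For every m ≥ 2 and every nonzero real number α, if α is a root of d_m (the evaluation of d_m at α is 0), then α⁻¹ is also a root of d_m. -/
open Polynomial

theorem dpoly_recip (α : ℝ) (hα : α ≠ 0) (k : ℕ) :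
    α ^ (k + 1) * Polynomial.aeval α⁻¹ (dpoly (k + 2)) =
      (-1) ^ (k + 1) * Polynomial.aeval α (dpoly (k + 2)) := by
  induction k using Nat.twoStepInduction with
  | zero => simp [dpoly]; field_simp
  | one =>
    have e : ∀ x : ℝ, Polynomial.aeval x (3 : ℤ[X]) = 3 := fun x => map_ofNat _ 3
    simp [dpoly, e]
    field_simp
    ring
  | more k h1 h2 =>
    have e : ∀ x : ℝ, Polynomial.aeval x (dpoly (k + 2 + 2)) =
        (1 - x) * Polynomial.aeval x (dpoly (k + 1 + 2))
          - x * Polynomial.aeval x (dpoly (k + 2)) := by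
      intro x
      simp [dpoly]
    rw [e, e]
    generalize Polynomial.aeval α⁻¹ (dpoly (k + 1 + 2)) = a at *
    generalize Polynomial.aeval α⁻¹ (dpoly (k + 2)) = b at *
    have hi : α * α⁻¹ = 1 := mul_inv_cancel₀ hα
    have : α ^ (k + 2 + 1) * ((1 - α⁻¹) * a - α⁻¹ * b) =
        (α - 1) * (α ^ (k + 1 + 1) * a) - α * (α ^ (k + 1) * b) := by
      linear_combination (-α ^ (k + 2) * a - α ^ (k + 2) * b) * hi
    rw [this, h1, h2]
    ring

/-- For m ≥ 2 and α ≠ 0 a real root of d_m, α⁻¹ is also a root of d_m. -/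
theorem stmt_13 (m : ℕ) (hm : 2 ≤ m) (α : ℝ) (hα : α ≠ 0)
    (hroot : Polynomial.aeval α (dpoly m) = 0) :
    Polynomial.aeval α⁻¹ (dpoly m) = 0 := by
  obtain ⟨k, rfl⟩ := Nat.exists_eq_add_of_le' hm
  have h := dpoly_recip α hα k
  rw [hroot, mul_zero] at h
  exact (mul_eq_zero.mp h).resolve_left (pow_ne_zero _ hα)
end

section
/- Let m ≥ 3 be odd, set r = (m−1)/2, and let α : Fin r → ℝ satisfy α i > 0 for every i, with d_m, viewed in ℝ[X], equal to ∏_{i} (X − α i)·(X − (α i)⁻¹). Then for every n ≥ 3 there exists a natural number N with 1 < N and N not prime such that (N : ℝ) = ∏_{i} ((α i)^n + (α i)^(−n) − 2). (That is, the number G_{m,n} = [∏_i ((α i)^{n/2} − (α i)^{−n/2})]² is a composite natural number.) -/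
open Polynomial

noncomputable def auxD : ℕ → Polynomial ℤ
  | 0 => X - 3
  | 1 => X ^ 2 - 7 * X + 11
  | (s + 2) => (X - 4) * auxD (s + 1) - auxD s

noncomputable def auxQ : ℕ → Polynomial ℤ
  | 0 => 0
  | 1 => 1
  | (s + 2) => X * auxQ (s + 1) - auxQ s

lemma dpoly_six (k : ℕ) : dpoly (k + 6) =
    ((1 - X) ^ 2 - 2 * X) * dpoly (k + 4) - X ^ 2 * dpoly (k + 2) := by
  have h1 : dpoly (k + 6) = (1 - X) * dpoly (k + 5) - X * dpoly (k + 4) := by rw [dpoly]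
  have h2 : dpoly (k + 5) = (1 - X) * dpoly (k + 4) - X * dpoly (k + 3) := by rw [dpoly]
  have h3 : dpoly (k + 4) = (1 - X) * dpoly (k + 3) - X * dpoly (k + 2) := by rw [dpoly]
  rw [h1, h2]
  linear_combination X * h3

lemma dpoly_eval (x : ℝ) (hx : x ≠ 0) (s : ℕ) :
    eval₂ (Int.castRingHom ℝ) x (dpoly (2 * s + 3)) =
      x ^ (s + 1) * eval₂ (Int.castRingHom ℝ) (x + x⁻¹) (auxD s) := by
  induction s using Nat.twoStepInduction with
  | zero =>
    simp [dpoly, auxD, eval₂_sub, eval₂_add, eval₂_mul]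
    field_simp
    ring
  | one =>
    simp [dpoly, auxD, eval₂_sub, eval₂_add, eval₂_mul]
    field_simp
    ring
  | more s ih1 ih2 =>
    have h : 2 * (s + 2) + 3 = (2 * s + 1) + 6 := by ring
    rw [h, dpoly_six, auxD]
    have e1 : (2 * s + 1) + 4 = 2 * (s + 1) + 3 := by ring
    have e2 : (2 * s + 1) + 2 = 2 * s + 3 := by ring
    rw [e1, e2]
    simp only [eval₂_sub, eval₂_mul, ih1, ih2]
    simp [eval₂_sub, eval₂_pow]
    generalize eval₂ (Int.castRingHom ℝ) (x + x⁻¹) (auxD s) = u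
    generalize eval₂ (Int.castRingHom ℝ) (x + x⁻¹) (auxD (s + 1)) = v
    field_simp
    ring

lemma auxD_two (s : ℕ) : eval₂ (Int.castRingHom ℝ) 2 (auxD s) = (-1) ^ (s + 1) := by
  induction s using Nat.twoStepInduction with
  | zero => simp [auxD]
  | one => norm_num [auxD]
  | more s ih1 ih2 =>
    rw [auxD]
    simp only [eval₂_sub, eval₂_mul, ih1, ih2]
    simp
    ring

lemma auxQ_pow (a b : ℝ) (h : a * b = 1) (k : ℕ) :
    (a - b) * eval₂ (Int.castRingHom ℝ) (a + b) (auxQ k) = a ^ k - b ^ k := by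
  induction k using Nat.twoStepInduction with
  | zero => simp [auxQ]
  | one => simp [auxQ]
  | more s ih1 ih2 =>
    rw [auxQ]
    simp only [eval₂_sub, eval₂_mul, eval₂_X]
    linear_combination (a + b) * ih2 - ih1 + (a ^ s - b ^ s) * h

lemma auxP_pow (a b : ℝ) (h : a * b = 1) (k : ℕ) :
    (1 - b) * (eval₂ (Int.castRingHom ℝ) (a + b) (auxQ (k + 1)) +
      eval₂ (Int.castRingHom ℝ) (a + b) (auxQ k)) = a ^ k - b ^ (k + 1) := by
  induction k using Nat.twoStepInduction with
  | zero => simp [auxQ]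
  | one => simp [auxQ]; linear_combination (-1) * h
  | more s ih1 ih2 =>
    have e1 : auxQ (s + 2 + 1) = X * auxQ (s + 2) - auxQ (s + 1) := by rw [auxQ]
    have e2 : auxQ (s + 2) = X * auxQ (s + 1) - auxQ s := by rw [auxQ]
    have f1 := congrArg (eval₂ (Int.castRingHom ℝ) (a + b)) e1
    have f2 := congrArg (eval₂ (Int.castRingHom ℝ) (a + b)) e2
    simp only [eval₂_sub, eval₂_mul, eval₂_X] at f1 f2
    linear_combination (a + b) * ih2 - ih1 + (a ^ s - b ^ (s + 1)) * h + (1 - b) * (f1 + f2)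

lemma auxQ_ge (t : ℝ) (ht : 2 ≤ t) (k : ℕ) :
    (k : ℝ) ≤ eval₂ (Int.castRingHom ℝ) t (auxQ k) ∧
    eval₂ (Int.castRingHom ℝ) t (auxQ k) + 1 ≤ eval₂ (Int.castRingHom ℝ) t (auxQ (k + 1)) := by
  induction k with
  | zero => simp [auxQ]
  | succ k ih =>
    obtain ⟨h1, h2⟩ := ih
    have h3 : (0 : ℝ) ≤ k := k.cast_nonneg
    refine ⟨by push_cast; linarith, ?_⟩
    have e1 : auxQ (k + 1 + 1) = X * auxQ (k + 1) - auxQ k := by rw [auxQ]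
    rw [e1]
    simp only [eval₂_sub, eval₂_mul, eval₂_X]
    nlinarith

lemma auxD_prod {ι : Type*} [Fintype ι] (s : ℕ) (hc : Fintype.card ι = s + 1) (α : ι → ℝ)
    (hpos : ∀ i, 0 < α i)
    (hd : (dpoly (2 * s + 3)).map (Int.castRingHom ℝ) =
      ∏ i, (X - C (α i)) * (X - C (α i)⁻¹)) :
    (auxD s).map (Int.castRingHom ℝ) = ∏ i, (X - C (α i + (α i)⁻¹)) := by
  apply eq_of_infinite_eval_eq
  refine (Set.Ici_infinite (2 : ℝ)).mono ?_
  intro y hy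
  have hy : (2 : ℝ) ≤ y := hy
  obtain ⟨x, hx, rfl⟩ : ∃ x : ℝ, x ≠ 0 ∧ x + x⁻¹ = y := by
    have hs := Real.sq_sqrt (show (0 : ℝ) ≤ y ^ 2 - 4 by nlinarith)
    have hs0 := Real.sqrt_nonneg (y ^ 2 - 4)
    have h0 : (y + √(y ^ 2 - 4)) / 2 ≠ 0 := by positivity
    refine ⟨(y + √(y ^ 2 - 4)) / 2, h0, ?_⟩
    have : ((y + √(y ^ 2 - 4)) / 2)⁻¹ = (y - √(y ^ 2 - 4)) / 2 := by
      apply inv_eq_of_mul_eq_one_right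
      linear_combination (-1/4) * hs
    rw [this]; ring
  have h := congrArg (eval x) hd
  rw [eval_map, dpoly_eval x hx, eval_prod] at h
  simp only [Set.mem_ofPred_eq, eval_map, eval_prod]
  apply mul_left_cancel₀ (pow_ne_zero (s + 1) hx)
  rw [h, ← hc, ← Finset.card_univ, ← Finset.prod_const, ← Finset.prod_mul_distrib]
  refine Finset.prod_congr rfl fun i _ => ?_
  have := (hpos i).ne'
  simp
  field_simp
  ring

lemma prod_int {ι : Type*} [Fintype ι] (f g : ℤ[X]) (t : ι → ℝ)
    (h : f.map (Int.castRingHom ℝ) = ∏ i, (X - C (t i))) :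
    ∃ z : ℤ, ∏ i, eval₂ (Int.castRingHom ℝ) (t i) g = z := by
  have h1 := resultant_prod_left Finset.univ (fun i => X - C (t i))
    (g.map (Int.castRingHom ℝ)) g.natDegree (by simp) natDegree_map_le
  refine ⟨resultant f g (∏ i, (X - C (t i))).natDegree g.natDegree, ?_⟩
  rw [← h, resultant_map_map] at h1
  rw [← h]
  refine Eq.trans ?_ h1.symm
  refine Finset.prod_congr rfl fun i _ => ?_
  have := resultant_X_sub_C_pow_left (t i) (g.map (Int.castRingHom ℝ)) 1 g.natDegree
    natDegree_map_le
  rw [eval_map, pow_one (eval₂ _ _ _)] at this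
  rw [natDegree_X_sub_C, ← this]
  congr 1
  rw [pow_one]

lemma fin_comp (G B A : ℝ) (hA : 1 < A) (hB : 0 < B) (zA zB : ℤ) (h1 : A = zA)
    (h2 : B = zB) (hG : G = B * A ^ 2) :
    ∃ N : ℕ, 1 < N ∧ ¬ Nat.Prime N ∧ (N : ℝ) = G := by
  subst h1 h2
  have hA' : 1 < zA := by exact_mod_cast hA
  have hB' : 0 < zB := by exact_mod_cast hB
  lift zA to ℕ using by omega
  lift zB to ℕ using by omega
  have hA' : 1 < zA := by exact_mod_cast hA
  have hB' : 0 < zB := by exact_mod_cast hB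
  refine ⟨(zB * zA) * zA, by nlinarith [Nat.mul_le_mul hB' hA'.le], ?_, ?_⟩
  · apply Nat.not_prime_mul
    · have : 1 * zA ≤ zB * zA := Nat.mul_le_mul_right _ hB'
      omega
    · omega
  · rw [hG]; push_cast; ring

lemma one_lt_prod_aux {ι : Type*} [Fintype ι] [Nonempty ι] (f : ι → ℝ) (h : ∀ i, 1 < f i) :
    1 < ∏ i, f i := by
  have := Finset.prod_lt_prod_of_nonempty (s := Finset.univ) (f := fun _ : ι => (1 : ℝ)) (g := f)
    (fun _ _ => one_pos) (fun i _ => h i) Finset.univ_nonempty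
  simpa using this

lemma main_aux {ι : Type*} [Fintype ι] (s : ℕ) (hc : Fintype.card ι = s + 1) (α : ι → ℝ)
    (hpos : ∀ i, 0 < α i)
    (hd : (dpoly (2 * s + 3)).map (Int.castRingHom ℝ) =
      ∏ i, (X - C (α i)) * (X - C (α i)⁻¹)) (n : ℕ) (hn : 3 ≤ n) :
    ∃ N : ℕ, 1 < N ∧ ¬ Nat.Prime N ∧
      (N : ℝ) = ∏ i, ((α i) ^ (n : ℤ) + (α i) ^ (-(n : ℤ)) - 2) := by
  have hD := auxD_prod s hc α hpos hd
  have hne : Nonempty ι := Fintype.card_pos_iff.mp (by omega)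
  have hinv : ∀ i, α i * (α i)⁻¹ = 1 := fun i => mul_inv_cancel₀ (hpos i).ne'
  have ht : ∀ i, 2 ≤ α i + (α i)⁻¹ := by
    intro i
    have h0 := hinv i
    have h2 := inv_pos.mpr (hpos i)
    nlinarith [sq_nonneg (α i - (α i)⁻¹), hpos i]
  have h1 : ∏ i, (α i + (α i)⁻¹ - 2) = 1 := by
    have h := congrArg (eval 2) hD
    rw [eval_map, auxD_two, eval_prod, ← hc, ← Finset.card_univ, ← Finset.prod_const] at h
    have h' : ∏ i, (α i + (α i)⁻¹ - 2) =
        (∏ i : ι, (-1 : ℝ)) * ∏ i, eval 2 (X - C (α i + (α i)⁻¹)) := by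
      rw [← Finset.prod_mul_distrib]
      refine Finset.prod_congr rfl fun i _ => ?_
      simp
    rw [h', ← h, ← Finset.prod_mul_distrib]
    simp
  rcases Nat.even_or_odd' n with ⟨k, rfl | rfl⟩
  · obtain ⟨zA, hzA⟩ := prod_int (auxD s) (auxQ k) _ hD
    obtain ⟨zB, hzB⟩ := prod_int (auxD s) (X + 2) _ hD
    refine fin_comp _ _ _ ?_ ?_ zA zB hzA hzB ?_
    · apply one_lt_prod_aux
      intro i
      have := (auxQ_ge _ (ht i) k).1
      have hk : (2 : ℝ) ≤ k := by exact_mod_cast (by omega : 2 ≤ k)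
      linarith
    · apply Finset.prod_pos
      intro i _
      simp
      linarith [ht i]
    · rw [← one_mul (∏ i, eval₂ _ _ (X + 2)), ← h1, ← Finset.prod_pow, ← Finset.prod_mul_distrib,
        ← Finset.prod_mul_distrib]
      refine Finset.prod_congr rfl fun i _ => ?_
      have hq := auxQ_pow _ _ (hinv i) k
      have hab : α i ^ k * (α i)⁻¹ ^ k = 1 := by rw [← mul_pow, hinv i, one_pow]
      rw [zpow_neg, ← inv_zpow, zpow_natCast, zpow_natCast]
      simp only [eval₂_add, eval₂_X, eval₂_ofNat]
      have hi := hinv i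
      generalize (α i)⁻¹ = b at *
      generalize α i = a at *
      generalize eval₂ (Int.castRingHom ℝ) (a + b) (auxQ k) = q at *
      have h4 : (a + b - 2) * (a + b + 2) * q ^ 2 = ((a - b) * q) ^ 2 := by
        linear_combination (4 * q ^ 2) * hi
      rw [h4, hq]
      linear_combination (2 : ℝ) * hab
  · obtain ⟨zA, hzA⟩ := prod_int (auxD s) (auxQ (k + 1) + auxQ k) _ hD
    refine fin_comp _ 1 _ ?_ one_pos zA 1 hzA (by simp) ?_
    · apply one_lt_prod_aux
      intro i
      have h2 := (auxQ_ge _ (ht i) k).1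
      have h3 := (auxQ_ge _ (ht i) k).2
      have hk : (1 : ℝ) ≤ k := by exact_mod_cast (by omega : 1 ≤ k)
      rw [eval₂_add]
      linarith
    · rw [← h1, ← Finset.prod_pow, ← Finset.prod_mul_distrib]
      refine Finset.prod_congr rfl fun i _ => ?_
      have hq := auxP_pow _ _ (hinv i) k
      have hq' := auxP_pow _ _ ((mul_comm _ _).trans (hinv i)) k
      rw [add_comm (α i)⁻¹ (α i)] at hq'
      have hab : α i ^ k * (α i)⁻¹ ^ k = 1 := by rw [← mul_pow, hinv i, one_pow]
      rw [zpow_neg, ← inv_zpow, zpow_natCast, zpow_natCast]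
      simp only [eval₂_add]
      have hi := hinv i
      generalize (α i)⁻¹ = b at *
      generalize α i = a at *
      generalize eval₂ (Int.castRingHom ℝ) (a + b) (auxQ (k + 1)) +
        eval₂ (Int.castRingHom ℝ) (a + b) (auxQ k) = q at *
      have h4 : (a + b - 2) * q ^ 2 = -(((1 - b) * q) * ((1 - a) * q)) := by
        linear_combination (q ^ 2) * hi
      rw [h4, hq, hq']
      have e : a ^ (k + 1) * b ^ (k + 1) = 1 := by rw [← mul_pow, hi, one_pow]
      linear_combination hab + e

/-- Let m ≥ 3 be odd, with the roots of d_m given by the positive real pairs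
α i, (α i)⁻¹ for i in Fin ((m−1)/2).  Then for every n ≥ 3, the number
G_{m,n} = ∏_i ((α i)^n + (α i)^(−n) − 2) is a composite natural number. -/
theorem stmt_14 (m : ℕ) (hm : 3 ≤ m) (hmo : Odd m)
    (α : Fin ((m - 1) / 2) → ℝ) (hpos : ∀ i, 0 < α i)
    (hd : (dpoly m).map (Int.castRingHom ℝ) =
      ∏ i, (X - C (α i)) * (X - C (α i)⁻¹))
    (n : ℕ) (hn : 3 ≤ n) :
    ∃ N : ℕ, 1 < N ∧ ¬ Nat.Prime N ∧
      (N : ℝ) = ∏ i, ((α i) ^ (n : ℤ) + (α i) ^ (-(n : ℤ)) - 2) := by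

  obtain ⟨j, rfl⟩ := hmo
  obtain ⟨s, rfl⟩ : ∃ s, j = s + 1 := ⟨j - 1, by omega⟩
  exact main_aux s (by simp) α hpos hd n hn
end

section
/- The roots of the polynomial X² − 3X + 1 (which is d_3) are φ² and φ^(−2), where φ is the golden ratio, and for every n ≥ 1, (φ²)^n + (φ²)^(−n) − 2 = L(2n) − 2; that is, G_{3,n} equals the determinant L(2n) − 2 of THK(3,n). -/
/-- The roots of X² − 3X + 1 (which is d_3) are φ² and φ^(−2), where
φ = (1 + √5)/2 is the golden ratio, and for every n ≥ 1,
(φ²)^n + (φ²)^(−n) − 2 = L(2n) − 2, i.e. G_{3,n} is the determinant of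
THK(3,n). -/
theorem stmt_17 (φ : ℝ) (hφ : φ = (1 + Real.sqrt 5) / 2) :
    (∀ x : ℝ, x ^ 2 - 3 * x + 1 = 0 ↔ x = φ ^ 2 ∨ x = (φ ^ 2)⁻¹) ∧
      ∀ n : ℕ, 1 ≤ n →
        (φ ^ 2) ^ (n : ℤ) + (φ ^ 2) ^ (-(n : ℤ)) - 2 = (lucas (2 * n) : ℝ) - 2 := by
  have h5 : Real.sqrt 5 ^ 2 = 5 := Real.sq_sqrt (by norm_num)
  have hq : φ ^ 2 = φ + 1 := by rw [hφ]; linear_combination h5 / 4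
  have hmul : φ ^ 2 * (1 - φ) ^ 2 = 1 := by
    have h : φ * (1 - φ) = -1 := by linear_combination -hq
    rw [← mul_pow, h]; norm_num
  have hinv : (φ ^ 2)⁻¹ = (1 - φ) ^ 2 := inv_eq_of_mul_eq_one_right hmul
  have hL : ∀ n : ℕ, (lucas n : ℝ) = φ ^ n + (1 - φ) ^ n ∧
      (lucas (n + 1) : ℝ) = φ ^ (n + 1) + (1 - φ) ^ (n + 1) := by
    intro n
    induction n with
    | zero => constructor <;> norm_num [lucas]
    | succ k ih =>
      refine ⟨ih.2, ?_⟩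
      have e : lucas (k + 1 + 1) = lucas (k + 1) + lucas k := by rw [lucas]
      rw [e, Nat.cast_add, ih.1, ih.2]
      linear_combination (-φ ^ k - (1 - φ) ^ k) * hq
  refine ⟨fun x => ?_, fun n _ => ?_⟩
  · have hf : x ^ 2 - 3 * x + 1 = (x - φ ^ 2) * (x - (φ ^ 2)⁻¹) := by
      rw [hinv]
      linear_combination (2 * x) * hq - hmul
    rw [hf, mul_eq_zero, sub_eq_zero, sub_eq_zero]
  · rw [zpow_neg, ← inv_zpow, hinv, zpow_natCast, zpow_natCast, (hL (2 * n)).1, pow_mul, pow_mul]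
end

section
/- For every integer m ≥ 2, if the Pell number P(m) is prime, then m is prime. -/
theorem pell_add_aux (m n : ℕ) :
    pell (m + n + 1) = pell (m + 1) * pell (n + 1) + pell m * pell n := by
  induction n using Nat.twoStepInduction with
  | zero => simp [pell]
  | one =>
    have h : pell (m + 1 + 1) = 2 * pell (m + 1) + pell m := rfl
    rw [h]; simp [pell]; ring
  | more n h1 h2 =>
    have e1 : pell (m + (n + 2) + 1) = 2 * pell (m + (n + 1) + 1) + pell (m + n + 1) := rfl
    have e2 : pell (n + 2 + 1) = 2 * pell (n + 1 + 1) + pell (n + 1) := rfl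
    have e3 : pell (n + 2) = 2 * pell (n + 1) + pell n := rfl
    rw [e1, h1, h2, e2, e3]; ring

theorem pell_dvd_aux (a k : ℕ) : pell a ∣ pell (a * k) := by
  induction k with
  | zero => simp [pell]
  | succ k ih =>
    cases a with
    | zero => simp
    | succ b =>
      have e : (b + 1) * (k + 1) = (b + 1) * k + b + 1 := by ring
      rw [e, pell_add_aux]
      exact dvd_add (Dvd.intro_left _ rfl) (ih.mul_right _)

theorem pell_pos_aux (n : ℕ) : 0 < pell (n + 1) := by
  induction n with
  | zero => simp [pell]
  | succ n ih =>
    have h : pell (n + 1 + 1) = 2 * pell (n + 1) + pell n := rfl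
    omega

theorem pell_mono_aux : StrictMono pell := by
  refine strictMono_nat_of_lt_succ fun n => ?_
  cases n with
  | zero => simp [pell]
  | succ n =>
    have h : pell (n + 1 + 1) = 2 * pell (n + 1) + pell n := rfl
    have := pell_pos_aux n
    omega

/-- For every m ≥ 2, if the Pell number P(m) is prime, then m is prime. -/
theorem stmt_18 (m : ℕ) (hm : 2 ≤ m) (hp : Nat.Prime (pell m)) : Nat.Prime m := by
  rw [Nat.prime_def]
  refine ⟨hm, fun a ha => ?_⟩
  obtain ⟨k, rfl⟩ := ha
  rcases (Nat.dvd_prime hp).1 (pell_dvd_aux a k) with h | h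
  · exact Or.inl (pell_mono_aux.injective (h.trans (by simp [pell])))
  · exact Or.inr (pell_mono_aux.injective h)
end
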